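/- Let B be a finite set of primitive types, m a positive integer, and S_{B,m} the (finite) set of L◇-provable bracket-free sequents A_1 ⋯ A_n ⇒ A_{n+1} with n ≤ 2, all A_i built over B, and ||A_i|| ≤ m. If A_1, ..., A_{n+1} are types over B with ||A_i|| ≤ m and A_1 ⋯ A_n ⇒ A_{n+1} is provable in L◇, then A_1 ⋯ A_n ⇒ A_{n+1} is derivable from S_{B,m} using the Cut rule only. -/

import Mathlib

/-- Types of the bracketed Lambek calculus. -/
inductive PTy where
  | prim : ℕ → PTy
  | ldiv : PTy → PTy → PTy   -- ldiv A B = A \ B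
  | rdiv : PTy → PTy → PTy   -- rdiv B A = B / A
  | mul  : PTy → PTy → PTy
  | dia  : PTy → PTy
  | box  : PTy → PTy
deriving DecidableEq

/-- Type trees: leaves labeled by types, internal nodes are brackets. -/
inductive PTree where
  | leaf : PTy → PTree
  | node : List PTree → PTree

abbrev PHedge := List PTree

/-- Contexts: a hedge with one distinguished hole. -/
inductive PCtx where
  | hole : PHedge → PHedge → PCtx
  | brk  : PCtx → PHedge → PHedge → PCtx

/-- Substitution of a hedge for the hole of a context. -/
def PCtx.plug : PCtx → PHedge → PHedge
  | .hole pre post, D => pre ++ D ++ post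
  | .brk c pre post, D => pre ++ (PTree.node (c.plug D) :: post)

/-- All primitive types occurring in the type belong to `B`. -/
def PTy.over (B : Finset ℕ) : PTy → Prop
  | .prim p => p ∈ B
  | .ldiv A C => A.over B ∧ C.over B
  | .rdiv C A => C.over B ∧ A.over B
  | .mul A C => A.over B ∧ C.over B
  | .dia A => A.over B
  | .box A => A.over B

/-- Length of a type. -/
def lenP : PTy → ℕ
  | .prim _ => 1
  | .ldiv A B => lenP A + lenP B
  | .rdiv B A => lenP B + lenP A
  | .mul A B => lenP A + lenP B
  | .dia A => lenP A + 2
  | .box A => lenP A + 2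

mutual
/-- The yield of a tree: the sequence of types labeling its leaves. -/
def yieldTree : PTree → List PTy
  | .leaf A => [A]
  | .node ts => yieldHedge ts
/-- The yield of a hedge. -/
def yieldHedge : List PTree → List PTy
  | [] => []
  | t :: ts => yieldTree t ++ yieldHedge ts
end
/-- L◇ : the Lambek calculus with brackets
(the antecedent must be nonempty in the right rules for the divisions). -/
inductive PProv : PHedge → PTy → Prop where
  | id (p) : PProv [.leaf (.prim p)] (.prim p)
  | ldivL (G : PHedge) (D : PCtx) (A B C) :
      PProv G A → PProv (D.plug [.leaf B]) C →
      PProv (D.plug (G ++ [.leaf (.ldiv A B)])) C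
  | ldivR (Pi : PHedge) (A B) : Pi ≠ [] →
      PProv (.leaf A :: Pi) B → PProv Pi (.ldiv A B)
  | rdivL (G : PHedge) (D : PCtx) (A B C) :
      PProv G A → PProv (D.plug [.leaf B]) C →
      PProv (D.plug (.leaf (.rdiv B A) :: G)) C
  | rdivR (Pi : PHedge) (A B) : Pi ≠ [] →
      PProv (Pi ++ [.leaf A]) B → PProv Pi (.rdiv B A)
  | mulL (G : PCtx) (A B C) :
      PProv (G.plug [.leaf A, .leaf B]) C → PProv (G.plug [.leaf (.mul A B)]) C
  | mulR (G D : PHedge) (A B) :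
      PProv G A → PProv D B → PProv (G ++ D) (.mul A B)
  | diaL (G : PCtx) (A B) :
      PProv (G.plug [.node [.leaf A]]) B → PProv (G.plug [.leaf (.dia A)]) B
  | diaR (G : PHedge) (A) :
      PProv G A → PProv [.node G] (.dia A)
  | boxL (G : PCtx) (A B) :
      PProv (G.plug [.leaf A]) B → PProv (G.plug [.node [.leaf (.box A)]]) B
  | boxR (G : PHedge) (A) :
      PProv [.node G] A → PProv G (.box A)
  | cut (G : PHedge) (D : PCtx) (A B) :
      PProv G A → PProv (D.plug [.leaf A]) B → PProv (D.plug G) B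
/-- Derivability of a sequent from a set of sequents using the Cut rule only. -/
inductive CutDeriv (S : Set (PHedge × PTy)) : PHedge → PTy → Prop where
  | base (G A) : (G, A) ∈ S → CutDeriv S G A
  | cut (G : PHedge) (D : PCtx) (A B) :
      CutDeriv S G A → CutDeriv S (D.plug [.leaf A]) B → CutDeriv S (D.plug G) B

/-- The set `S_{B,m}` of L◇-provable bracket-free sequents with at most 2 antecedent
types, all types built over `B` of length at most `m`. -/
def SBm (B : Finset ℕ) (m : ℕ) : Set (PHedge × PTy) :=
  {s | ∃ (L : List PTy) (A : PTy),
        s = (L.map PTree.leaf, A) ∧ L.length ≤ 2 ∧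
        (∀ T ∈ A :: L, PTy.over B T ∧ lenP T ≤ m) ∧
        PProv (L.map PTree.leaf) A}


/-! ### Labelled string calculus -/

/-- Labelled types: every primitive type and every modality end carries a label. -/
inductive LTy where
  | prim : ℕ → ℕ → LTy
  | ldiv : LTy → LTy → LTy
  | rdiv : LTy → LTy → LTy
  | mul : LTy → LTy → LTy
  | dia : ℕ → ℕ → LTy → LTy
  | box : ℕ → ℕ → LTy → LTy

/-- Generators of the free group. -/
inductive Gen where
  | p : ℕ → ℕ → Gen
  | o : ℕ → Gen
  | c : ℕ → Gen
deriving DecidableEq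

/-- Tokens: types and labelled brackets. -/
inductive LTok where
  | ty : LTy → LTok
  | op : ℕ → LTok
  | cl : ℕ → LTok

/-- Bracket depth of a token. -/
def tdp : LTok → ℤ
  | .ty _ => 0
  | .op _ => 1
  | .cl _ => -1

/-- Bracket depth of a string. -/
def dp : List LTok → ℤ
  | [] => 0
  | t :: s => tdp t + dp s

/-- Balanced strings. -/
def Bal (s : List LTok) : Prop := dp s = 0 ∧ ∀ x y, s = x ++ y → 0 ≤ dp x

/-- Cut-free labelled calculus on token strings. -/
inductive LProv : List LTok → LTy → Prop where
  | id (p k) : LProv [.ty (.prim p k)] (.prim p k)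
  | ldivL (G U V : List LTok) (A B C) : LProv G A → LProv (U ++ .ty B :: V) C →
      LProv (U ++ (G ++ .ty (.ldiv A B) :: V)) C
  | ldivR (G : List LTok) (A B) : G ≠ [] → LProv (.ty A :: G) B → LProv G (.ldiv A B)
  | rdivL (G U V : List LTok) (A B C) : LProv G A → LProv (U ++ .ty B :: V) C →
      LProv (U ++ .ty (.rdiv B A) :: (G ++ V)) C
  | rdivR (G : List LTok) (A B) : G ≠ [] → LProv (G ++ [.ty A]) B → LProv G (.rdiv B A)
  | mulL (U V : List LTok) (A B C) : LProv (U ++ .ty A :: .ty B :: V) C →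
      LProv (U ++ .ty (.mul A B) :: V) C
  | mulR (G D : List LTok) (A B) : LProv G A → LProv D B → LProv (G ++ D) (.mul A B)
  | diaL (U V : List LTok) (i j A C) : LProv (U ++ .op i :: .ty A :: .cl j :: V) C →
      LProv (U ++ .ty (.dia i j A) :: V) C
  | diaR (G : List LTok) (i j A) : LProv G A → LProv (.op i :: (G ++ [.cl j])) (.dia i j A)
  | boxL (U V : List LTok) (i j A C) : LProv (U ++ .ty A :: V) C →
      LProv (U ++ .op i :: .ty (.box i j A) :: .cl j :: V) C
  | boxR (G : List LTok) (i j A) : G ≠ [] → Bal G → LProv (.op i :: (G ++ [.cl j])) A →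
      LProv G (.box i j A)

/-- Number of occurrences of a generator in a type. -/
def cnt (g : Gen) : LTy → ℕ
  | .prim p k => if g = .p p k then 1 else 0
  | .ldiv A B => cnt g A + cnt g B
  | .rdiv A B => cnt g A + cnt g B
  | .mul A B => cnt g A + cnt g B
  | .dia i j A => (if g = .o i then 1 else 0) + cnt g A + (if g = .c j then 1 else 0)
  | .box i j A => (if g = .o i then 1 else 0) + cnt g A + (if g = .c j then 1 else 0)

/-- Number of occurrences of a generator in a token. -/
def tcnt (g : Gen) : LTok → ℕ
  | .ty A => cnt g A
  | .op i => if g = .o i then 1 else 0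
  | .cl j => if g = .c j then 1 else 0

/-- Number of occurrences of a generator in a string. -/
def scnt (g : Gen) : List LTok → ℕ
  | [] => 0
  | t :: s => tcnt g t + scnt g s

theorem scnt_append (g : Gen) (s t : List LTok) : scnt g (s ++ t) = scnt g s + scnt g t := by
  induction s with
  | nil => simp [scnt]
  | cons a s ih => simp [scnt, ih]; omega

theorem dp_append (s t : List LTok) : dp (s ++ t) = dp s + dp t := by
  induction s with
  | nil => simp [dp]
  | cons a s ih => simp [dp, ih]; omega

theorem Bal.nil : Bal [] := by
  refine ⟨rfl, ?_⟩
  intro x y h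
  have : x = [] := by simp_all
  simp [this, dp]

theorem bal_replace {U V X Y : List LTok} (h : Bal (U ++ (X ++ V))) (hX : dp X = 0) (hY : Bal Y) :
    Bal (U ++ (Y ++ V)) := by
  refine ⟨?_, ?_⟩
  · have := h.1
    have := hY.1
    simp only [dp_append] at *
    omega
  · intro x y hxy
    rcases List.append_eq_append_iff.1 hxy with ⟨W, rfl, h2⟩ | ⟨W, rfl, h2⟩
    · rcases List.append_eq_append_iff.1 h2 with ⟨W', rfl, h3⟩ | ⟨W', rfl, h3⟩
      · have := h.2 (U ++ (X ++ W')) y (by simp [h3])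
        have := hY.1
        simp only [dp_append] at *
        omega
      · have := h.2 U (X ++ V) rfl
        have := hY.2 W W' rfl
        simp only [dp_append] at *
        omega
    · exact h.2 x (W ++ (X ++ V)) (by simp)

theorem bal_sub {U V X : List LTok} (h : Bal (U ++ (X ++ V))) (hU : dp U = 0) (hX : dp X = 0) :
    Bal X := by
  refine ⟨hX, ?_⟩
  rintro x y rfl
  have := h.2 (U ++ x) (y ++ V) (by simp)
  simp only [dp_append] at *
  omega

theorem Bal.append {X Y : List LTok} (hX : Bal X) (hY : Bal Y) : Bal (X ++ Y) := by
  have := bal_replace (U := X) (V := []) (X := []) (Y := Y) (by simpa using hX) rfl hY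
  simpa using this

theorem Bal.ty (A : LTy) : Bal [.ty A] := by
  refine ⟨rfl, ?_⟩
  intro x y h
  rcases x with _ | ⟨a, x⟩
  · simp [dp]
  · have h1 : a = .ty A := by simp_all
    have h2 : x = [] := by simp_all
    simp [h1, h2, dp, tdp]

theorem Bal.br {s : List LTok} (h : Bal s) (i j : ℕ) : Bal (.op i :: (s ++ [.cl j])) := by
  refine ⟨?_, ?_⟩
  · have := h.1
    simp only [dp_append, dp, tdp] at *
    omega
  · intro x y hxy
    rcases x with _ | ⟨a, x⟩
    · simp [dp]
    · simp only [List.cons_append, List.cons.injEq] at hxy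
      obtain ⟨rfl, hxy⟩ := hxy
      rcases List.append_eq_append_iff.1 hxy with ⟨W, rfl, h2⟩ | ⟨W, rfl, h2⟩
      · have := h.1
        rcases W with _ | ⟨b, W⟩
        · simp only [dp_append, dp, tdp] at *
          omega
        · have h3 : b = .cl j := by simp_all
          have h4 : W = [] := by simp_all
          subst h3 h4
          simp only [dp_append, dp, tdp] at *
          omega
      · have := h.2 x W rfl
        simp only [dp, tdp] at *
        omega

theorem LProv.ne {s : List LTok} {C : LTy} (h : LProv s C) : s ≠ [] := by
  induction h <;> simp_all

theorem split3 {α : Type} {X Y Z U V : List α} {t : α} (h : X ++ (Y ++ Z) = U ++ t :: V) :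
    (∃ W, X = U ++ t :: W ∧ V = W ++ (Y ++ Z)) ∨
    (∃ W1 W2, U = X ++ W1 ∧ Y = W1 ++ t :: W2 ∧ V = W2 ++ Z) ∨
    (∃ W, U = X ++ (Y ++ W) ∧ Z = W ++ t :: V) := by
  rcases List.append_eq_append_iff.1 h with ⟨W, rfl, h2⟩ | ⟨W, rfl, h2⟩
  · rcases List.append_eq_append_iff.1 h2 with ⟨W', rfl, h3⟩ | ⟨W', rfl, h3⟩
    · right; right; exact ⟨W', by simp, h3⟩
    · rcases W' with _ | ⟨a, W'⟩
      · right; right; exact ⟨[], by simp, by simpa using h3.symm⟩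
      · simp only [List.cons_append, List.cons.injEq] at h3
        obtain ⟨rfl, rfl⟩ := h3
        right; left; exact ⟨W, W', rfl, rfl, rfl⟩
  · rcases W with _ | ⟨a, W⟩
    · simp only [List.nil_append] at h2
      rcases Y with _ | ⟨b, Y⟩
      · right; right; exact ⟨[], by simp, by simpa using h2.symm⟩
      · simp only [List.cons_append, List.cons.injEq] at h2
        obtain ⟨rfl, rfl⟩ := h2
        right; left; exact ⟨[], Y, by simp, rfl, rfl⟩
    · simp only [List.cons_append, List.cons.injEq] at h2
      obtain ⟨rfl, rfl⟩ := h2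
      left; exact ⟨W, rfl, rfl⟩

theorem split2 {α : Type} {X Y Z U V : List α} (h : X ++ (Y ++ Z) = U ++ V) :
    (∃ W, X = U ++ W ∧ V = W ++ (Y ++ Z)) ∨
    (∃ W1 W2, W1 ≠ [] ∧ W2 ≠ [] ∧ U = X ++ W1 ∧ Y = W1 ++ W2 ∧ V = W2 ++ Z) ∨
    (∃ W, U = X ++ (Y ++ W) ∧ Z = W ++ V) := by
  rcases List.append_eq_append_iff.1 h with ⟨W, rfl, h2⟩ | ⟨W, rfl, h2⟩
  · rcases List.append_eq_append_iff.1 h2 with ⟨W', rfl, h3⟩ | ⟨W', rfl, h3⟩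
    · right; right; exact ⟨W', by simp, h3⟩
    · by_cases hW : W = []
      · subst hW
        left; exact ⟨[], by simp, by simp [h3]⟩
      · by_cases hW' : W' = []
        · subst hW'
          right; right; exact ⟨[], by simp, by simp [h3]⟩
        · right; left; exact ⟨W, W', hW, hW', rfl, rfl, h3⟩
  · left; exact ⟨W, rfl, h2⟩

/-- A positional variant of `dp` bookkeeping: balanced strings of provable sequents. -/
theorem LProv.bal {s : List LTok} {C : LTy} (h : LProv s C) : Bal s := by
  induction h with
  | id p k => exact Bal.ty _
  | ldivL G U V A B C _ _ ih1 ih2 =>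
    have := bal_replace (U := U) (V := V) (X := [.ty B]) (by simpa using ih2) rfl
      (ih1.append (Bal.ty (.ldiv A B)))
    simpa using this
  | rdivL G U V A B C _ _ ih1 ih2 =>
    have := bal_replace (U := U) (V := V) (X := [.ty B]) (by simpa using ih2) rfl
      ((Bal.ty (.rdiv B A)).append ih1)
    simpa using this
  | ldivR G A B _ _ ih =>
    exact bal_sub (U := [.ty A]) (V := []) (by simpa using ih) rfl
      (by have := ih.1; simp [dp, tdp] at this; omega)
  | rdivR G A B _ _ ih =>
    exact bal_sub (U := []) (V := [.ty A]) (by simpa using ih) rfl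
      (by have := ih.1; simp [dp, tdp, dp_append] at this; omega)
  | mulL U V A B C _ ih =>
    have := bal_replace (U := U) (V := V) (X := [.ty A, .ty B]) (by simpa using ih) rfl
      (Bal.ty (.mul A B))
    simpa using this
  | mulR G D A B _ _ ih1 ih2 => exact ih1.append ih2
  | diaL U V i j A C _ ih =>
    have := bal_replace (U := U) (V := V) (X := [.op i, .ty A, .cl j]) (by simpa using ih)
      (by simp [dp, tdp]) (Bal.ty (.dia i j A))
    simpa using this
  | diaR G i j A _ ih => exact ih.br i j
  | boxL U V i j A C _ ih =>
    have := bal_replace (U := U) (V := V) (X := [.ty A]) (by simpa using ih) rfl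
      ((Bal.ty (.box i j A)).br i j)
    simpa using this
  | boxR G i j A _ hb _ _ => exact hb

theorem LProv.congr {s t : List LTok} {C : LTy} (h : LProv s C) (e : s = t) : LProv t C := e ▸ h

theorem bal_cons_cl {j : ℕ} {s : List LTok} (h : Bal (.cl j :: s)) : False := by
  have := h.2 [.cl j] s rfl
  simp [dp, tdp] at this

theorem bal_snoc_op {i : ℕ} {s : List LTok} (h : Bal (s ++ [.op i])) : False := by
  have := h.2 s _ rfl
  have := h.1
  simp [dp, tdp, dp_append] at this
  omega

/-- If `X ++ Y` and `Y ++ Z` are balanced, so are the three pieces. -/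
theorem bal_overlap {X Y Z : List LTok} (h1 : Bal (X ++ Y)) (h2 : Bal (Y ++ Z)) :
    Bal X ∧ Bal Y ∧ Bal Z := by
  have a1 := h1.2 X Y rfl
  have a2 := h2.2 Y Z rfl
  have a3 := h1.1
  have a4 := h2.1
  rw [dp_append] at a3 a4
  have hX : dp X = 0 := by omega
  have hY : dp Y = 0 := by omega
  have hZ : dp Z = 0 := by omega
  exact ⟨bal_sub (U := []) (V := Y) (by simpa using h1) rfl hX,
    bal_sub (U := []) (V := Z) (by simpa using h2) rfl hY,
    bal_sub (U := Y) (V := []) (by simpa using h2) hY hZ⟩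

theorem Bal.swap {U V X Y : List LTok} (h : Bal (U ++ (X ++ V))) (hX : dp X = 0 := by rfl)
    (hY : Bal Y) : Bal (U ++ (Y ++ V)) := bal_replace h hX hY

theorem bal_final {X Y : List LTok} (h : Bal (X ++ Y)) (hX : dp X = 0) : Bal Y :=
  bal_sub (U := X) (V := []) (by simpa using h) hX
    (by have := h.1; rw [dp_append] at this; omega)

theorem bal_initial {X Y : List LTok} (h : Bal (X ++ Y)) (hY : dp Y = 0) : Bal X :=
  bal_sub (U := []) (V := Y) (by simpa using h) rfl
    (by have := h.1; rw [dp_append] at this; omega)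

/-- The interpolation property. -/
def Interp (P Q R : List LTok) (C : LTy) : Prop :=
  ∃ E, LProv Q E ∧ LProv (P ++ .ty E :: R) C ∧
    ∀ g, cnt g E ≤ scnt g Q ∧ cnt g E ≤ scnt g P + scnt g R + cnt g C

theorem split1 {α : Type} {X Y U V : List α} (h : X ++ Y = U ++ V) :
    (∃ W, W ≠ [] ∧ U = X ++ W ∧ Y = W ++ V) ∨ (∃ W, X = U ++ W ∧ V = W ++ Y) := by
  rcases List.append_eq_append_iff.1 h with ⟨W, h1, h2⟩ | ⟨W, h1, h2⟩
  · by_cases hW : W = []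
    · subst hW
      right; exact ⟨[], by simp_all, by simp_all⟩
    · left; exact ⟨W, hW, h1, h2⟩
  · right; exact ⟨W, h1, h2⟩

theorem interp_ldivL {G U V : List LTok} {A B C : LTy} (h1 : LProv G A)
    (h2 : LProv (U ++ .ty B :: V) C)
    (ih1 : ∀ P Q R, P ++ (Q ++ R) = G → Q ≠ [] → Bal Q → Interp P Q R A)
    (ih2 : ∀ P Q R, P ++ (Q ++ R) = U ++ .ty B :: V → Q ≠ [] → Bal Q → Interp P Q R C)
    (P Q R : List LTok) (he : P ++ (Q ++ R) = U ++ (G ++ .ty (.ldiv A B) :: V))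
    (hQ : Q ≠ []) (hb : Bal Q) : Interp P Q R C := by
  rw [← List.append_assoc U] at he
  have hG := h1.bal
  rcases split3 he with ⟨W, rfl, rfl⟩ | ⟨W1, W2, e1, rfl, rfl⟩ | ⟨W, e1, rfl⟩
  · obtain ⟨E, p1, p2, p3⟩ := ih2 (U ++ .ty B :: W) Q R (by simp) hQ hb
    refine ⟨E, p1, ?_, ?_⟩
    · exact (LProv.ldivL G U (W ++ .ty E :: R) A B C h1 (p2.congr (by simp))).congr (by simp)
    · intro g
      have := p3 g
      simp only [scnt_append, scnt, tcnt, cnt] at *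
      omega
  · rcases split1 e1 with ⟨W, hW, rfl, rfl⟩ | ⟨W, rfl, rfl⟩
    · obtain ⟨b1, b2, b3⟩ := bal_overlap hG hb
      obtain ⟨E, p1, p2, p3⟩ := ih1 [] W W1 (by simp) hW b1
      obtain ⟨F, q1, q2, q3⟩ := ih2 U (.ty B :: W2) R (by simp) (by simp)
        (bal_replace (U := []) (X := [.ty (.ldiv A B)]) (Y := [.ty B]) (by simpa using b3) rfl
          (Bal.ty B))
      refine ⟨.ldiv E F, ?_, ?_, ?_⟩
      · refine LProv.ldivR _ _ _ (by simp) ?_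
        exact (LProv.ldivL _ [] W2 A B F p2 (by simpa using q1)).congr (by simp)
      · exact (LProv.ldivL W U R E F C p1 q2).congr (by simp)
      · intro g
        have := p3 g
        have := q3 g
        simp only [scnt_append, scnt, tcnt, cnt] at *
        omega
    · obtain ⟨E, p1, p2, p3⟩ := ih2 P (W ++ .ty B :: W2) R (by simp) (by simp)
        (bal_replace (U := W) (X := G ++ [.ty (.ldiv A B)]) (Y := [.ty B]) (by simpa using hb)
          (by have := hG.1; simp [dp_append, dp, tdp, this]) (Bal.ty B))
      refine ⟨E, ?_, p2, ?_⟩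
      · exact (LProv.ldivL G W W2 A B E h1 p1).congr (by simp)
      · intro g
        have := p3 g
        simp only [scnt_append, scnt, tcnt, cnt] at *
        omega
  · rcases split2 e1.symm with ⟨W', rfl, rfl⟩ | ⟨W1, W2, n1, n2, rfl, rfl, rfl⟩ | ⟨W', rfl, rfl⟩
    · obtain ⟨E, p1, p2, p3⟩ := ih1 W' Q W (by simp) hQ hb
      refine ⟨E, p1, ?_, ?_⟩
      · exact (LProv.ldivL _ U V A B C p2 h2).congr (by simp)
      · intro g
        have := p3 g
        simp only [scnt_append, scnt, tcnt, cnt] at *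
        omega
    · obtain ⟨b1, b2, b3⟩ := bal_overlap hb hG
      obtain ⟨E, p1, p2, p3⟩ := ih2 P W1 (.ty B :: V) (by simp) n1 b1
      obtain ⟨F, q1, q2, q3⟩ := ih1 [] W2 W (by simp) n2 b2
      refine ⟨.mul E F, .mulR _ _ _ _ p1 q1, ?_, ?_⟩
      · refine LProv.mulL _ _ _ _ _ ?_
        exact (LProv.ldivL _ (P ++ [.ty E]) V A B C q2 (p2.congr (by simp))).congr (by simp)
      · intro g
        have := p3 g
        have := q3 g
        simp only [scnt_append, scnt, tcnt, cnt] at *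
        omega
    · obtain ⟨E, p1, p2, p3⟩ := ih2 P Q (W' ++ .ty B :: V) (by simp) hQ hb
      refine ⟨E, p1, ?_, ?_⟩
      · exact (LProv.ldivL G (P ++ .ty E :: W') V A B C h1 (p2.congr (by simp))).congr (by simp)
      · intro g
        have := p3 g
        simp only [scnt_append, scnt, tcnt, cnt] at *
        omega

theorem interp_rdivL {G U V : List LTok} {A B C : LTy} (h1 : LProv G A)
    (h2 : LProv (U ++ .ty B :: V) C)
    (ih1 : ∀ P Q R, P ++ (Q ++ R) = G → Q ≠ [] → Bal Q → Interp P Q R A)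
    (ih2 : ∀ P Q R, P ++ (Q ++ R) = U ++ .ty B :: V → Q ≠ [] → Bal Q → Interp P Q R C)
    (P Q R : List LTok) (he : P ++ (Q ++ R) = U ++ .ty (.rdiv B A) :: (G ++ V))
    (hQ : Q ≠ []) (hb : Bal Q) : Interp P Q R C := by
  have hG := h1.bal
  rcases split3 he with ⟨W, rfl, e1⟩ | ⟨W1, W2, rfl, rfl, e1⟩ | ⟨W, rfl, rfl⟩
  · rcases split2 e1.symm with ⟨W', rfl, rfl⟩ | ⟨W1, W2, n1, n2, rfl, rfl, rfl⟩ | ⟨W', rfl, rfl⟩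
    · obtain ⟨E, p1, p2, p3⟩ := ih2 (U ++ .ty B :: W') Q R (by simp) hQ hb
      refine ⟨E, p1, ?_, ?_⟩
      · exact (LProv.rdivL G U (W' ++ .ty E :: R) A B C h1 (p2.congr (by simp))).congr (by simp)
      · intro g
        have := p3 g
        simp only [scnt_append, scnt, tcnt, cnt] at *
        omega
    · obtain ⟨b1, b2, b3⟩ := bal_overlap hG hb
      obtain ⟨E, p1, p2, p3⟩ := ih2 (U ++ [.ty B]) W2 R (by simp) n2 b3
      obtain ⟨F, q1, q2, q3⟩ := ih1 W W1 [] (by simp) n1 b2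
      refine ⟨.mul F E, .mulR _ _ _ _ q1 p1, ?_, ?_⟩
      · refine LProv.mulL _ _ _ _ _ ?_
        exact (LProv.rdivL _ U (.ty E :: R) A B C q2 (p2.congr (by simp))).congr (by simp)
      · intro g
        have := p3 g
        have := q3 g
        simp only [scnt_append, scnt, tcnt, cnt] at *
        omega
    · obtain ⟨E, p1, p2, p3⟩ := ih1 W Q W' (by simp) hQ hb
      refine ⟨E, p1, ?_, ?_⟩
      · exact (LProv.rdivL _ U V A B C p2 h2).congr (by simp)
      · intro g
        have := p3 g
        simp only [scnt_append, scnt, tcnt, cnt] at *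
        omega
  · rcases split1 e1.symm with ⟨W, hW, rfl, rfl⟩ | ⟨W, rfl, rfl⟩
    · have hb' : Bal ((W1 ++ [.ty (.rdiv B A)]) ++ W2) := by simpa using hb
      obtain ⟨b1, b2, b3⟩ := bal_overlap hb' hG
      obtain ⟨E, p1, p2, p3⟩ := ih1 W2 W [] (by simp) hW b3
      obtain ⟨F, q1, q2, q3⟩ := ih2 P (W1 ++ [.ty B]) V (by simp) (by simp)
        (by
          have := bal_replace (U := W1) (V := []) (X := [.ty (.rdiv B A)]) (Y := [.ty B])
            (by simpa using b1) rfl (Bal.ty B)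
          simpa using this)
      refine ⟨.rdiv F E, ?_, ?_, ?_⟩
      · refine LProv.rdivR _ _ _ (by simp) ?_
        exact (LProv.rdivL _ W1 [] A B F p2 q1).congr (by simp)
      · exact (LProv.rdivL W P V E F C p1 q2).congr (by simp)
      · intro g
        have := p3 g
        have := q3 g
        simp only [scnt_append, scnt, tcnt, cnt] at *
        omega
    · obtain ⟨E, p1, p2, p3⟩ := ih2 P (W1 ++ .ty B :: W) R (by simp) (by simp)
        (bal_replace (U := W1) (X := .ty (.rdiv B A) :: G) (Y := [.ty B]) (by simpa using hb)
          (by have := hG.1; simp [dp, tdp, this]) (Bal.ty B))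
      refine ⟨E, ?_, p2, ?_⟩
      · exact (LProv.rdivL G W1 W A B E h1 p1).congr (by simp)
      · intro g
        have := p3 g
        simp only [scnt_append, scnt, tcnt, cnt] at *
        omega
  · obtain ⟨E, p1, p2, p3⟩ := ih2 P Q (W ++ .ty B :: V) (by simp) hQ hb
    refine ⟨E, p1, ?_, ?_⟩
    · exact (LProv.rdivL G (P ++ .ty E :: W) V A B C h1 (p2.congr (by simp))).congr (by simp)
    · intro g
      have := p3 g
      simp only [scnt_append, scnt, tcnt, cnt] at *
      omega

theorem interp_one {U V K : List LTok} {T C : LTy} (hK0 : K ≠ []) (hKb : Bal K)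
    (hT : ∀ g, scnt g K = cnt g T)
    (hL : ∀ U V C, LProv (U ++ (K ++ V)) C → LProv (U ++ .ty T :: V) C)
    (ih : ∀ P Q R, P ++ (Q ++ R) = U ++ (K ++ V) → Q ≠ [] → Bal Q → Interp P Q R C)
    (P Q R : List LTok) (he : P ++ (Q ++ R) = U ++ .ty T :: V)
    (hQ : Q ≠ []) (hb : Bal Q) : Interp P Q R C := by
  rcases split3 he with ⟨W, rfl, rfl⟩ | ⟨W1, W2, rfl, rfl, rfl⟩ | ⟨W, rfl, rfl⟩
  · obtain ⟨E, p1, p2, p3⟩ := ih (U ++ (K ++ W)) Q R (by simp) hQ hb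
    refine ⟨E, p1, ?_, ?_⟩
    · exact (hL U (W ++ .ty E :: R) C (p2.congr (by simp))).congr (by simp)
    · intro g
      have := p3 g
      have := hT g
      simp only [scnt_append, scnt, tcnt, cnt] at *
      omega
  · obtain ⟨E, p1, p2, p3⟩ := ih P (W1 ++ (K ++ W2)) R (by simp) (by simp [hK0])
      (bal_replace (X := [.ty T]) (by simpa using hb) rfl hKb)
    refine ⟨E, hL _ _ _ p1, p2, ?_⟩
    intro g
    have := p3 g
    have := hT g
    simp only [scnt_append, scnt, tcnt, cnt] at *
    omega
  · obtain ⟨E, p1, p2, p3⟩ := ih P Q (W ++ (K ++ V)) (by simp) hQ hb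
    refine ⟨E, p1, ?_, ?_⟩
    · exact (hL (P ++ .ty E :: W) V C (p2.congr (by simp))).congr (by simp)
    · intro g
      have := p3 g
      have := hT g
      simp only [scnt_append, scnt, tcnt, cnt] at *
      omega

theorem snoc_cases {α : Type} (l : List α) : l = [] ∨ ∃ l' a, l = l' ++ [a] := by
  induction l using List.reverseRecOn with
  | nil => left; rfl
  | append_singleton l a _ => right; exact ⟨l, a, rfl⟩

theorem interp_boxL {U V : List LTok} {i j : ℕ} {A C : LTy}
    (ih : ∀ P Q R, P ++ (Q ++ R) = U ++ .ty A :: V → Q ≠ [] → Bal Q → Interp P Q R C)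
    (P Q R : List LTok) (he : P ++ (Q ++ R) = U ++ .op i :: .ty (.box i j A) :: .cl j :: V)
    (hQ : Q ≠ []) (hb : Bal Q) : Interp P Q R C := by
  have he' : P ++ (Q ++ R) = (U ++ [.op i]) ++ .ty (.box i j A) :: .cl j :: V := by simp [he]
  rcases split3 he' with ⟨W, rfl, e1⟩ | ⟨W1, W2, e1, rfl, e2⟩ | ⟨W, e1, rfl⟩
  · rcases W with _ | ⟨t, W⟩
    · rcases Q with _ | ⟨q, Q⟩
      · exact absurd rfl hQ
      · simp only [List.nil_append, List.cons_append, List.cons.injEq] at e1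
        obtain ⟨rfl, _⟩ := e1
        exact (bal_cons_cl hb).elim
    · simp only [List.cons_append, List.cons.injEq] at e1
      obtain ⟨rfl, rfl⟩ := e1
      obtain ⟨E, p1, p2, p3⟩ := ih (U ++ .ty A :: W) Q R (by simp) hQ hb
      refine ⟨E, p1, ?_, ?_⟩
      · exact (LProv.boxL U (W ++ .ty E :: R) i j A C (p2.congr (by simp))).congr (by simp)
      · intro g
        have := p3 g
        simp only [scnt_append, scnt, tcnt, cnt] at *
        omega
  · rcases snoc_cases W1 with rfl | ⟨W1, t, rfl⟩
    · rcases W2 with _ | ⟨t, W2⟩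
      · simp only [List.nil_append, List.append_nil] at e1 e2
        subst e1 e2
        obtain ⟨E, p1, p2, p3⟩ := ih U [.ty A] V (by simp) (by simp) (Bal.ty A)
        refine ⟨.box i j E, ?_, ?_, ?_⟩
        · refine LProv.boxR _ _ _ _ (by simp) (Bal.ty _) ?_
          exact (LProv.boxL [] [] i j A E (by simpa using p1)).congr (by simp)
        · exact (LProv.boxL U V i j E C p2).congr (by simp)
        · intro g
          have := p3 g
          simp only [scnt_append, scnt, tcnt, cnt] at *
          omega
      · simp only [List.cons_append, List.cons.injEq] at e2
        obtain ⟨rfl, rfl⟩ := e2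
        have := hb.2 [.ty (.box i j A), .cl j] W2 (by simp)
        simp [dp, tdp] at this
    · have e3 : U = P ++ W1 ∧ t = .op i := by
        rw [← List.append_assoc] at e1
        have := List.append_inj' e1 rfl
        simp_all
      obtain ⟨rfl, rfl⟩ := e3
      rcases W2 with _ | ⟨t, W2⟩
      · have h1 := hb.1
        have h2 := hb.2 W1 [.op i, .ty (.box i j A)] (by simp)
        simp only [dp_append, dp, tdp] at h1
        omega
      · simp only [List.cons_append, List.cons.injEq] at e2
        obtain ⟨rfl, rfl⟩ := e2
        obtain ⟨E, p1, p2, p3⟩ := ih P (W1 ++ .ty A :: W2) R (by simp) (by simp)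
          (bal_replace (U := W1) (X := [.op i, .ty (.box i j A), .cl j]) (Y := [.ty A])
            (by simpa using hb) (by simp [dp, tdp]) (Bal.ty A))
        refine ⟨E, ?_, p2, ?_⟩
        · exact (LProv.boxL _ _ i j A E p1).congr (by simp)
        · intro g
          have := p3 g
          simp only [scnt_append, scnt, tcnt, cnt] at *
          omega
  · rcases snoc_cases W with rfl | ⟨W, t, rfl⟩
    · rcases snoc_cases Q with rfl | ⟨Q, t, rfl⟩
      · exact absurd rfl hQ
      · have : t = .op i := by
          rw [List.append_nil, ← List.append_assoc] at e1
          have := List.append_inj' e1 rfl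
          simp_all
        subst this
        exact (bal_snoc_op hb).elim
    · have e3 : U = P ++ (Q ++ W) ∧ t = .op i := by
        rw [← List.append_assoc, ← List.append_assoc] at e1
        have := List.append_inj' e1 rfl
        simp_all
      obtain ⟨rfl, rfl⟩ := e3
      obtain ⟨E, p1, p2, p3⟩ := ih P Q (W ++ .ty A :: V) (by simp) hQ hb
      refine ⟨E, p1, ?_, ?_⟩
      · exact (LProv.boxL (P ++ .ty E :: W) V i j A C (p2.congr (by simp))).congr (by simp)
      · intro g
        have := p3 g
        simp only [scnt_append, scnt, tcnt, cnt] at *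
        omega

theorem interp_diaR {G : List LTok} {i j : ℕ} {A : LTy} (h1 : LProv G A)
    (ih : ∀ P Q R, P ++ (Q ++ R) = G → Q ≠ [] → Bal Q → Interp P Q R A)
    (P Q R : List LTok) (he : P ++ (Q ++ R) = .op i :: (G ++ [.cl j]))
    (hQ : Q ≠ []) (hb : Bal Q) : Interp P Q R (.dia i j A) := by
  have hG := h1.bal
  rcases P with _ | ⟨t, P⟩
  · rcases Q with _ | ⟨q, Q⟩
    · exact absurd rfl hQ
    · simp only [List.nil_append, List.cons_append, List.cons.injEq] at he
      obtain ⟨rfl, he⟩ := he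
      rcases snoc_cases R with rfl | ⟨R, t, rfl⟩
      · rw [List.append_nil] at he
        subst he
        obtain ⟨E, p1, p2, p3⟩ := ih [] G [] (by simp) h1.ne hG
        refine ⟨.dia i j E, .diaR _ _ _ _ p1, ?_, ?_⟩
        · refine (LProv.diaL [] [] _ _ _ _ ?_).congr rfl
          exact (LProv.diaR _ i j _ p2).congr (by simp)
        · intro g
          have := p3 g
          simp only [scnt_append, scnt, tcnt, cnt] at *
          omega
      · rw [← List.append_assoc] at he
        have := List.append_inj' he rfl
        have e := this.1
        have h3 := hG.2 Q R e.symm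
        have h4 := hb.1
        simp only [dp, tdp] at h4
        omega
  · simp only [List.cons_append, List.cons.injEq] at he
    obtain ⟨rfl, he⟩ := he
    rcases snoc_cases R with rfl | ⟨R, t, rfl⟩
    · rcases snoc_cases Q with rfl | ⟨Q, t, rfl⟩
      · exact absurd rfl hQ
      · rw [List.append_nil, ← List.append_assoc] at he
        have := List.append_inj' he rfl
        obtain ⟨e, e2⟩ := this
        simp only [List.cons.injEq, and_true] at e2
        subst e2
        have h3 := hG.2 P Q e.symm
        have h4 := hb.1
        have h5 := hG.1
        rw [← e] at h5
        simp only [dp_append, dp, tdp] at h4 h5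
        omega
    · rw [← List.append_assoc, ← List.append_assoc] at he
      have := List.append_inj' he rfl
      obtain ⟨e, e2⟩ := this
      simp only [List.cons.injEq, and_true] at e2
      subst e2
      obtain ⟨E, p1, p2, p3⟩ := ih P Q R (by simpa using e) hQ hb
      refine ⟨E, p1, ?_, ?_⟩
      · exact (LProv.diaR _ i j _ p2).congr (by simp)
      · intro g
        have := p3 g
        simp only [scnt_append, scnt, tcnt, cnt] at *
        omega

/-- Interpolation theorem for the labelled calculus. -/
theorem interpolation {s : List LTok} {C : LTy} (h : LProv s C) :
    ∀ P Q R, P ++ (Q ++ R) = s → Q ≠ [] → Bal Q → Interp P Q R C := by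
  induction h with
  | id p k =>
    intro P Q R he hQ hb
    have : P = [] ∧ Q = [.ty (.prim p k)] ∧ R = [] := by
      rcases P with _ | ⟨a, P⟩
      · rcases Q with _ | ⟨b, Q⟩
        · exact absurd rfl hQ
        · simp_all
      · simp_all
    obtain ⟨rfl, rfl, rfl⟩ := this
    exact ⟨.prim p k, .id p k, .id p k, fun g => by simp [scnt, tcnt]⟩
  | ldivL G U V A B C h1 h2 ih1 ih2 => exact interp_ldivL h1 h2 ih1 ih2
  | rdivL G U V A B C h1 h2 ih1 ih2 => exact interp_rdivL h1 h2 ih1 ih2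
  | ldivR G A B hG _ ih =>
    rintro P Q R rfl hQ hb
    obtain ⟨E, p1, p2, p3⟩ := ih (.ty A :: P) Q R (by simp) hQ hb
    refine ⟨E, p1, .ldivR _ _ _ (by simp) (p2.congr (by simp)), ?_⟩
    intro g
    have := p3 g
    simp only [scnt_append, scnt, tcnt, cnt] at *
    omega
  | rdivR G A B hG _ ih =>
    rintro P Q R rfl hQ hb
    obtain ⟨E, p1, p2, p3⟩ := ih P Q (R ++ [.ty A]) (by simp) hQ hb
    refine ⟨E, p1, .rdivR _ _ _ (by simp) (p2.congr (by simp)), ?_⟩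
    intro g
    have := p3 g
    simp only [scnt_append, scnt, tcnt, cnt] at *
    omega
  | mulL U V A B C _ ih =>
    exact interp_one (K := [.ty A, .ty B]) (by simp) ((Bal.ty A).append (Bal.ty B))
      (fun g => by simp [scnt, tcnt, cnt]) (fun U V C h => LProv.mulL U V A B C h) ih
  | mulR G D A B h1 h2 ih1 ih2 =>
    intro P Q R he hQ hb
    rcases split2 he with ⟨W, rfl, rfl⟩ | ⟨W1, W2, n1, n2, rfl, rfl, rfl⟩ | ⟨W, rfl, rfl⟩
    · obtain ⟨E, p1, p2, p3⟩ := ih2 W Q R rfl hQ hb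
      refine ⟨E, p1, (LProv.mulR _ _ _ _ h1 p2).congr (by simp), ?_⟩
      intro g
      have := p3 g
      simp only [scnt_append, scnt, tcnt, cnt] at *
      omega
    · obtain ⟨b1, b2, -⟩ := bal_overlap h1.bal hb
      obtain ⟨-, -, b3⟩ := bal_overlap hb h2.bal
      obtain ⟨b3, -, -⟩ := bal_overlap hb h2.bal
      obtain ⟨-, b4, -⟩ := bal_overlap hb h2.bal
      obtain ⟨E, p1, p2, p3⟩ := ih1 P W1 [] (by simp) n1 b3
      obtain ⟨F, q1, q2, q3⟩ := ih2 [] W2 R (by simp) n2 b4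
      refine ⟨.mul E F, .mulR _ _ _ _ p1 q1, ?_, ?_⟩
      · exact LProv.mulL _ _ _ _ _ ((LProv.mulR _ _ _ _ p2 q2).congr (by simp))
      · intro g
        have := p3 g
        have := q3 g
        simp only [scnt_append, scnt, tcnt, cnt] at *
        omega
    · obtain ⟨E, p1, p2, p3⟩ := ih1 P Q W rfl hQ hb
      refine ⟨E, p1, (LProv.mulR _ _ _ _ p2 h2).congr (by simp), ?_⟩
      intro g
      have := p3 g
      simp only [scnt_append, scnt, tcnt, cnt] at *
      omega
  | diaL U V i j A C _ ih =>
    exact interp_one (K := [.op i, .ty A, .cl j]) (by simp) ((Bal.ty A).br i j)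
      (fun g => by simp [scnt, tcnt, cnt]; omega) (fun U V C h => LProv.diaL U V i j A C h) ih
  | diaR G i j A h1 ih => exact interp_diaR h1 ih
  | boxL U V i j A C _ ih => exact interp_boxL ih
  | boxR G i j A hG hbG _ ih =>
    rintro P Q R rfl hQ hb
    obtain ⟨E, p1, p2, p3⟩ := ih (.op i :: P) Q (R ++ [.cl j]) (by simp) hQ hb
    refine ⟨E, p1, .boxR _ _ _ _ (by simp) ?_ (p2.congr (by simp)), ?_⟩
    · exact bal_replace (Y := [.ty E]) hbG hb.1 (Bal.ty E)
    · intro g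
      have := p3 g
      simp only [scnt_append, scnt, tcnt, cnt] at *
      omega

/-! ### Cut elimination by a semantic argument -/

/-- Embedding of types with all labels zero. -/
def emb : PTy → LTy
  | .prim p => .prim p 0
  | .ldiv A B => .ldiv (emb A) (emb B)
  | .rdiv A B => .rdiv (emb A) (emb B)
  | .mul A B => .mul (emb A) (emb B)
  | .dia A => .dia 0 0 (emb A)
  | .box A => .box 0 0 (emb A)

/-- Erasure of labels. -/
def er : LTy → PTy
  | .prim p _ => .prim p
  | .ldiv A B => .ldiv (er A) (er B)
  | .rdiv A B => .rdiv (er A) (er B)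
  | .mul A B => .mul (er A) (er B)
  | .dia _ _ A => .dia (er A)
  | .box _ _ A => .box (er A)

theorem er_emb (A : PTy) : er (emb A) = A := by
  induction A <;> simp_all [er, emb]

/-- Nonempty balanced strings. -/
def Dom (s : List LTok) : Prop := s ≠ [] ∧ Bal s

theorem Dom.append {s t : List LTok} (hs : Dom s) (ht : Dom t) : Dom (s ++ t) :=
  ⟨by simp [hs.1], hs.2.append ht.2⟩

theorem LProv.dom {s : List LTok} {C : LTy} (h : LProv s C) : Dom s := ⟨h.ne, h.bal⟩

/-- Closure operator. -/
def Cl (X : Set (List LTok)) : Set (List LTok) :=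
  {s | Dom s ∧ ∀ u v C, (∀ x ∈ X, LProv (u ++ (x ++ v)) C) → LProv (u ++ (s ++ v)) C}

/-- Interpretation of types. -/
def Sm : PTy → Set (List LTok)
  | .prim p => {s | LProv s (.prim p 0)}
  | .ldiv A B => {s | Dom s ∧ ∀ a ∈ Sm A, a ++ s ∈ Sm B}
  | .rdiv B A => {s | Dom s ∧ ∀ a ∈ Sm A, s ++ a ∈ Sm B}
  | .mul A B => Cl {s | ∃ a ∈ Sm A, ∃ b ∈ Sm B, s = a ++ b}
  | .dia A => Cl {s | ∃ a ∈ Sm A, s = .op 0 :: (a ++ [.cl 0])}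
  | .box A => {s | Dom s ∧ .op 0 :: (s ++ [.cl 0]) ∈ Sm A}

theorem Sm.dom {A : PTy} {s : List LTok} (h : s ∈ Sm A) : Dom s := by
  cases A with
  | prim p => exact LProv.dom h
  | _ => exact h.1

theorem Cl.closed {X : Set (List LTok)} {s : List LTok} (h : s ∈ Cl (Cl X)) : s ∈ Cl X := by
  refine ⟨h.1, fun u v C H => h.2 u v C (fun x hx => hx.2 u v C H)⟩

theorem Sm.closed (A : PTy) : ∀ s, s ∈ Cl (Sm A) → s ∈ Sm A := by
  induction A with
  | prim p =>
    intro s h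
    have := h.2 [] [] (.prim p 0) (fun x hx => LProv.congr hx (by simp))
    exact LProv.congr this (by simp)
  | ldiv A B ihA ihB =>
    intro s h
    refine ⟨h.1, fun a ha => ihB _ ⟨(Sm.dom ha).append h.1, fun u v C H => ?_⟩⟩
    refine (h.2 (u ++ a) v C (fun x hx => ?_)).congr (by simp)
    exact (H _ (hx.2 a ha)).congr (by simp)
  | rdiv B A ihB ihA =>
    intro s h
    refine ⟨h.1, fun a ha => ihB _ ⟨h.1.append (Sm.dom ha), fun u v C H => ?_⟩⟩
    refine (h.2 u (a ++ v) C (fun x hx => ?_)).congr (by simp)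
    exact (H _ (hx.2 a ha)).congr (by simp)
  | mul A B => exact fun s h => Cl.closed h
  | dia A => exact fun s h => Cl.closed h
  | box A ih =>
    intro s h
    refine ⟨h.1, ih _ ⟨⟨by simp, h.1.2.br 0 0⟩, fun u v C H => ?_⟩⟩
    refine (h.2 (u ++ [.op 0]) (.cl 0 :: v) C (fun x hx => ?_)).congr (by simp)
    exact (H _ hx.2).congr (by simp)

theorem dom_ty (A : LTy) : Dom [.ty A] := ⟨by simp, Bal.ty A⟩

theorem Sm.main (A : PTy) : [.ty (emb A)] ∈ Sm A ∧ ∀ s ∈ Sm A, LProv s (emb A) := by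
  induction A with
  | prim p => exact ⟨LProv.id p 0, fun s h => h⟩
  | ldiv A B ihA ihB =>
    refine ⟨⟨dom_ty _, fun a ha => Sm.closed _ _ ⟨(Sm.dom ha).append (dom_ty _), ?_⟩⟩, ?_⟩
    · intro u v C H
      exact (LProv.ldivL a u v (emb A) (emb B) C (ihA.2 a ha) ((H _ ihB.1).congr (by simp))).congr
        (by simp [emb])
    · intro s hs
      exact LProv.ldivR _ _ _ hs.1.1 (ihB.2 _ (hs.2 _ ihA.1))
  | rdiv B A ihB ihA =>
    refine ⟨⟨dom_ty _, fun a ha => Sm.closed _ _ ⟨(dom_ty _).append (Sm.dom ha), ?_⟩⟩, ?_⟩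
    · intro u v C H
      exact (LProv.rdivL a u v (emb A) (emb B) C (ihA.2 a ha) ((H _ ihB.1).congr (by simp))).congr
        (by simp [emb])
    · intro s hs
      exact LProv.rdivR _ _ _ hs.1.1 (ihB.2 _ (hs.2 _ ihA.1))
  | mul A B ihA ihB =>
    refine ⟨⟨dom_ty _, ?_⟩, ?_⟩
    · intro u v C H
      exact LProv.mulL u v _ _ C ((H _ ⟨_, ihA.1, _, ihB.1, rfl⟩).congr (by simp))
    · intro s hs
      have := hs.2 [] [] (emb (.mul A B)) (by
        rintro x ⟨a, ha, b, hb, rfl⟩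
        exact (LProv.mulR _ _ _ _ (ihA.2 a ha) (ihB.2 b hb)).congr (by simp))
      simpa using this
  | dia A ih =>
    refine ⟨⟨dom_ty _, ?_⟩, ?_⟩
    · intro u v C H
      exact LProv.diaL u v _ _ _ C ((H _ ⟨_, ih.1, rfl⟩).congr (by simp))
    · intro s hs
      have := hs.2 [] [] (emb (.dia A)) (by
        rintro x ⟨a, ha, rfl⟩
        exact (LProv.diaR _ 0 0 _ (ih.2 a ha)).congr (by simp))
      simpa using this
  | box A ih =>
    refine ⟨⟨dom_ty _, Sm.closed _ _ ⟨⟨by simp, (Bal.ty _).br 0 0⟩, ?_⟩⟩, ?_⟩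
    · intro u v C H
      exact (LProv.boxL u v 0 0 (emb A) C ((H _ ih.1).congr (by simp))).congr (by simp [emb])
    · intro s hs
      exact LProv.boxR _ _ _ _ hs.1.1 hs.1.2 (ih.2 _ hs.2)

mutual
/-- Interpretation of trees. -/
def SmT : PTree → Set (List LTok)
  | .leaf A => Sm A
  | .node ts => {s | ∃ x ∈ SmH ts, s = .op 0 :: (x ++ [.cl 0])}
/-- Interpretation of hedges. -/
def SmH : List PTree → Set (List LTok)
  | [] => {[]}
  | t :: ts => {s | ∃ x ∈ SmT t, ∃ y ∈ SmH ts, s = x ++ y}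
end

mutual
theorem SmT.dom : ∀ (t : PTree) (s : List LTok), s ∈ SmT t → Dom s
  | .leaf A, s, h => by
    rw [SmT] at h
    exact Sm.dom h
  | .node ts, s, h => by
    rw [SmT] at h
    obtain ⟨x, hx, rfl⟩ := h
    exact ⟨by simp, (SmH.bal ts x hx).br 0 0⟩
theorem SmH.bal : ∀ (H : List PTree) (s : List LTok), s ∈ SmH H → Bal s
  | [], s, h => by
    rw [SmH] at h
    rw [Set.mem_singleton_iff.1 h]
    exact Bal.nil
  | t :: ts, s, h => by
    rw [SmH] at h
    obtain ⟨x, hx, y, hy, rfl⟩ := h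
    exact (SmT.dom t x hx).2.append (SmH.bal ts y hy)
end

theorem SmH.dom {H : List PTree} {s : List LTok} (h : s ∈ SmH H) (hH : H ≠ []) : Dom s := by
  refine ⟨?_, SmH.bal _ _ h⟩
  rcases H with _ | ⟨t, ts⟩
  · exact absurd rfl hH
  · rw [SmH] at h
    obtain ⟨x, hx, y, hy, rfl⟩ := h
    have := (SmT.dom t x hx).1
    simp [this]

theorem SmH_append (H K : List PTree) (s : List LTok) :
    s ∈ SmH (H ++ K) ↔ ∃ x ∈ SmH H, ∃ y ∈ SmH K, s = x ++ y := by
  induction H generalizing s with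
  | nil => simp [SmH]
  | cons t ts ih =>
    simp only [List.cons_append, SmH, Set.mem_ofPred_eq, ih]
    constructor
    · rintro ⟨x, hx, _, ⟨y, hy, z, hz, rfl⟩, rfl⟩
      exact ⟨_, ⟨x, hx, y, hy, rfl⟩, z, hz, by simp⟩
    · rintro ⟨_, ⟨x, hx, y, hy, rfl⟩, z, hz, rfl⟩
      exact ⟨x, hx, _, ⟨y, hy, z, hz, rfl⟩, by simp⟩

theorem SmH_leaf (A : PTy) (s : List LTok) : s ∈ SmH [.leaf A] ↔ s ∈ Sm A := by
  simp [SmH, SmT]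

theorem SmH_node (G : List PTree) (s : List LTok) :
    s ∈ SmH [.node G] ↔ ∃ x ∈ SmH G, s = .op 0 :: (x ++ [.cl 0]) := by
  simp [SmH, SmT]

theorem SmH_cons_leaf (A : PTy) (G : List PTree) (s : List LTok) :
    s ∈ SmH (.leaf A :: G) ↔ ∃ x ∈ Sm A, ∃ y ∈ SmH G, s = x ++ y := by
  simp [SmH, SmT]

theorem SmH_plug (D : PCtx) : ∃ R : List LTok → List LTok → Prop, ∀ X s,
    s ∈ SmH (D.plug X) ↔ ∃ u v, R u v ∧ ∃ x ∈ SmH X, s = u ++ (x ++ v) := by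
  induction D with
  | hole pre post =>
    refine ⟨fun u v => u ∈ SmH pre ∧ v ∈ SmH post, fun X s => ?_⟩
    simp only [PCtx.plug, SmH_append]
    constructor
    · rintro ⟨_, ⟨u, hu, x, hx, rfl⟩, v, hv, rfl⟩
      exact ⟨u, v, ⟨hu, hv⟩, x, hx, by simp⟩
    · rintro ⟨u, v, ⟨hu, hv⟩, x, hx, rfl⟩
      exact ⟨_, ⟨u, hu, x, hx, rfl⟩, v, hv, by simp⟩
  | brk c pre post ih =>
    obtain ⟨R, hR⟩ := ih
    refine ⟨fun u v => ∃ u0 ∈ SmH pre, ∃ v0 ∈ SmH post, ∃ u1 v1, R u1 v1 ∧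
      u = u0 ++ .op 0 :: u1 ∧ v = v1 ++ .cl 0 :: v0, fun X s => ?_⟩
    simp only [PCtx.plug, SmH_append]
    constructor
    · rintro ⟨u0, hu0, y, hy, rfl⟩
      rw [SmH] at hy
      obtain ⟨w, hw, v0, hv0, rfl⟩ := hy
      rw [SmT] at hw
      obtain ⟨w, hw, rfl⟩ := hw
      obtain ⟨u1, v1, h1, x, hx, rfl⟩ := (hR _ _).1 hw
      exact ⟨_, _, ⟨u0, hu0, v0, hv0, u1, v1, h1, rfl, rfl⟩, x, hx, by simp⟩
    · rintro ⟨_, _, ⟨u0, hu0, v0, hv0, u1, v1, h1, rfl, rfl⟩, x, hx, rfl⟩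
      refine ⟨u0, hu0, .op 0 :: ((u1 ++ (x ++ v1)) ++ [.cl 0]) ++ v0, ?_, by simp⟩
      rw [SmH]
      refine ⟨_, ?_, v0, hv0, rfl⟩
      rw [SmT]
      exact ⟨_, (hR _ _).2 ⟨u1, v1, h1, x, hx, rfl⟩, rfl⟩

mutual
/-- No empty brackets in a tree. -/
def NEt : PTree → Prop
  | .leaf _ => True
  | .node ts => ts ≠ [] ∧ NEh ts
/-- No empty brackets in a hedge. -/
def NEh : List PTree → Prop
  | [] => True
  | t :: ts => NEt t ∧ NEh ts
end

theorem NEh_append (H K : List PTree) : NEh (H ++ K) ↔ NEh H ∧ NEh K := by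
  induction H with
  | nil => simp [NEh]
  | cons t ts ih => simp [NEh, ih, and_assoc]

theorem NEh_plug (D : PCtx) (X Y : PHedge) (hY : Y ≠ [] ∧ NEh Y)
    (h : D.plug X ≠ [] ∧ NEh (D.plug X)) : D.plug Y ≠ [] ∧ NEh (D.plug Y) := by
  induction D with
  | hole pre post => simp_all [PCtx.plug, NEh_append]
  | brk c pre post ih => simp_all [PCtx.plug, NEh_append, NEh, NEt]

theorem PProv.ne {H : PHedge} {A : PTy} (h : PProv H A) : H ≠ [] ∧ NEh H := by
  induction h with
  | id p => simp [NEh, NEt]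
  | ldivL G D A B C _ _ ih1 ih2 =>
    exact NEh_plug D _ _ (by simp [NEh_append, NEh, NEt, ih1]) ih2
  | ldivR Pi A B hP _ ih => exact ⟨hP, by simpa [NEh, NEt] using ih.2⟩
  | rdivL G D A B C _ _ ih1 ih2 =>
    exact NEh_plug D _ _ (by simp [NEh, NEt, ih1]) ih2
  | rdivR Pi A B hP _ ih => exact ⟨hP, by simpa [NEh, NEt, NEh_append] using ih.2⟩
  | mulL G A B C _ ih => exact NEh_plug G _ _ (by simp [NEh, NEt]) ih
  | mulR G D A B _ _ ih1 ih2 => simp [NEh_append, ih1, ih2]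
  | diaL G A B _ ih => exact NEh_plug G _ _ (by simp [NEh, NEt]) ih
  | diaR G A _ ih => simp [NEh, NEt, ih]
  | boxL G A B _ ih => exact NEh_plug G _ _ (by simp [NEh, NEt]) ih
  | boxR G A _ ih => simpa [NEh, NEt] using ih
  | cut G D A B _ _ ih1 ih2 => exact NEh_plug D _ _ ih1 ih2

theorem Sm.cl_sub {X : Set (List LTok)} {C : PTy} {u v s : List LTok} (x0 : List LTok)
    (hx0 : x0 ∈ X) (hX : ∀ x ∈ X, Dom x) (h : ∀ x ∈ X, u ++ (x ++ v) ∈ Sm C) (hs : s ∈ Cl X) :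
    u ++ (s ++ v) ∈ Sm C := by
  refine Sm.closed _ _ ⟨⟨?_, ?_⟩, ?_⟩
  · have := hs.1.1
    simp [this]
  · exact bal_replace (Sm.dom (h x0 hx0)).2 (hX x0 hx0).2.1 hs.1.2
  · intro u' v' C' H
    refine (hs.2 (u' ++ u) (v ++ v') C' (fun x hx => ?_)).congr (by simp)
    exact (H _ (h x hx)).congr (by simp)

theorem Sm.sub_cl {X : Set (List LTok)} {s : List LTok} (h : s ∈ X) (hd : Dom s) : s ∈ Cl X :=
  ⟨hd, fun _ _ _ H => H s h⟩

theorem soundness {H : PHedge} {A : PTy} (h : PProv H A) : ∀ s ∈ SmH H, s ∈ Sm A := by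
  induction h with
  | id p => intro s hs; exact (SmH_leaf _ _).1 hs
  | ldivL G D A B C _ _ ih1 ih2 =>
    intro s hs
    obtain ⟨R, hR⟩ := SmH_plug D
    obtain ⟨u, v, h1, x, hx, rfl⟩ := (hR _ _).1 hs
    obtain ⟨g, hg, a, ha, rfl⟩ := (SmH_append _ _ _).1 hx
    rw [SmH_leaf] at ha
    exact ih2 _ ((hR _ _).2 ⟨u, v, h1, _, (SmH_leaf _ _).2 (ha.2 g (ih1 g hg)), rfl⟩)
  | rdivL G D A B C _ _ ih1 ih2 =>
    intro s hs
    obtain ⟨R, hR⟩ := SmH_plug D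
    obtain ⟨u, v, h1, x, hx, rfl⟩ := (hR _ _).1 hs
    obtain ⟨a, ha, g, hg, rfl⟩ := (SmH_cons_leaf _ _ _).1 hx
    exact ih2 _ ((hR _ _).2 ⟨u, v, h1, _, (SmH_leaf _ _).2 (ha.2 g (ih1 g hg)), rfl⟩)
  | ldivR Pi A B hP _ ih =>
    intro s hs
    exact ⟨SmH.dom hs hP, fun a ha => ih _ ((SmH_cons_leaf _ _ _).2 ⟨a, ha, s, hs, rfl⟩)⟩
  | rdivR Pi A B hP _ ih =>
    intro s hs
    exact ⟨SmH.dom hs hP, fun a ha => ih _ ((SmH_append _ _ _).2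
      ⟨s, hs, a, (SmH_leaf _ _).2 ha, rfl⟩)⟩
  | mulL G A B C _ ih =>
    intro s hs
    obtain ⟨R, hR⟩ := SmH_plug G
    obtain ⟨u, v, h1, x, hx, rfl⟩ := (hR _ _).1 hs
    rw [SmH_leaf] at hx
    refine Sm.cl_sub (X := {s | ∃ a ∈ Sm A, ∃ b ∈ Sm B, s = a ++ b}) _ ⟨_, (Sm.main A).1, _, (Sm.main B).1, rfl⟩ ?_ ?_ hx
    · rintro _ ⟨a, ha, b, hb, rfl⟩
      exact (Sm.dom ha).append (Sm.dom hb)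
    · rintro _ ⟨a, ha, b, hb, rfl⟩
      exact ih _ ((hR _ _).2 ⟨u, v, h1, _, (SmH_cons_leaf _ _ _).2
        ⟨a, ha, b, (SmH_leaf _ _).2 hb, rfl⟩, rfl⟩)
  | mulR G D A B _ _ ih1 ih2 =>
    intro s hs
    obtain ⟨g, hg, a, ha, rfl⟩ := (SmH_append _ _ _).1 hs
    have h1 := ih1 g hg
    have h2 := ih2 a ha
    exact Sm.sub_cl ⟨g, h1, a, h2, rfl⟩ ((Sm.dom h1).append (Sm.dom h2))
  | diaL G A B _ ih =>
    intro s hs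
    obtain ⟨R, hR⟩ := SmH_plug G
    obtain ⟨u, v, h1, x, hx, rfl⟩ := (hR _ _).1 hs
    rw [SmH_leaf] at hx
    refine Sm.cl_sub (X := {s | ∃ a ∈ Sm A, s = LTok.op 0 :: (a ++ [LTok.cl 0])}) _ ⟨_, (Sm.main A).1, rfl⟩ ?_ ?_ hx
    · rintro _ ⟨a, ha, rfl⟩
      exact ⟨by simp, (Sm.dom ha).2.br 0 0⟩
    · rintro _ ⟨a, ha, rfl⟩
      exact ih _ ((hR _ _).2 ⟨u, v, h1, _, (SmH_node _ _).2
        ⟨a, (SmH_leaf _ _).2 ha, rfl⟩, rfl⟩)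
  | diaR G A _ ih =>
    intro s hs
    obtain ⟨g, hg, rfl⟩ := (SmH_node _ _).1 hs
    have h1 := ih g hg
    exact Sm.sub_cl ⟨g, h1, rfl⟩ ⟨by simp, (Sm.dom h1).2.br 0 0⟩
  | boxL G A B _ ih =>
    intro s hs
    obtain ⟨R, hR⟩ := SmH_plug G
    obtain ⟨u, v, h1, x, hx, rfl⟩ := (hR _ _).1 hs
    obtain ⟨g, hg, rfl⟩ := (SmH_node _ _).1 hx
    rw [SmH_leaf] at hg
    exact ih _ ((hR _ _).2 ⟨u, v, h1, _, (SmH_leaf _ _).2 hg.2, rfl⟩)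
  | boxR G A h ih =>
    intro s hs
    have hne : G ≠ [] := by
      have := h.ne
      simp [NEh, NEt] at this
      exact this.1
    exact ⟨SmH.dom hs hne, ih _ ((SmH_node _ _).2 ⟨s, hs, rfl⟩)⟩
  | cut G D A B _ _ ih1 ih2 =>
    intro s hs
    obtain ⟨R, hR⟩ := SmH_plug D
    obtain ⟨u, v, h1, x, hx, rfl⟩ := (hR _ _).1 hs
    exact ih2 _ ((hR _ _).2 ⟨u, v, h1, _, (SmH_leaf _ _).2 (ih1 x hx), rfl⟩)

theorem cut_elim {L : List PTy} {A : PTy} (h : PProv (L.map PTree.leaf) A) :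
    LProv (L.map (fun T => .ty (emb T))) (emb A) := by
  refine (Sm.main A).2 _ (soundness h _ ?_)
  clear h
  induction L with
  | nil => simp [SmH]
  | cons T L ih =>
    exact (SmH_cons_leaf _ _ _).2 ⟨_, (Sm.main T).1, _, ih, rfl⟩

/-! ### Thin relabelling -/

/-- Renaming of labels in types. -/
def ren (r : ℕ → ℕ) : LTy → LTy
  | .prim p k => .prim p (r k)
  | .ldiv A B => .ldiv (ren r A) (ren r B)
  | .rdiv A B => .rdiv (ren r A) (ren r B)
  | .mul A B => .mul (ren r A) (ren r B)
  | .dia i j A => .dia (r i) (r j) (ren r A)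
  | .box i j A => .box (r i) (r j) (ren r A)

/-- Renaming of labels in tokens. -/
def tren (r : ℕ → ℕ) : LTok → LTok
  | .ty A => .ty (ren r A)
  | .op i => .op (r i)
  | .cl j => .cl (r j)

/-- Renaming of labels in generators. -/
def gren (r : ℕ → ℕ) : Gen → Gen
  | .p p k => .p p (r k)
  | .o i => .o (r i)
  | .c j => .c (r j)

/-- Label of a generator. -/
def glab : Gen → ℕ
  | .p _ k => k
  | .o i => i
  | .c j => j

theorem dp_ren (r : ℕ → ℕ) (s : List LTok) : dp (s.map (tren r)) = dp s := by
  induction s with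
  | nil => rfl
  | cons t s ih => cases t <;> simp [dp, tren, tdp, ih]

theorem bal_ren (r : ℕ → ℕ) (s : List LTok) : Bal (s.map (tren r)) ↔ Bal s := by
  constructor
  · rintro ⟨h1, h2⟩
    refine ⟨by rwa [dp_ren] at h1, ?_⟩
    rintro x y rfl
    have := h2 (x.map (tren r)) (y.map (tren r)) (by simp)
    rwa [dp_ren] at this
  · rintro ⟨h1, h2⟩
    refine ⟨by rwa [dp_ren], ?_⟩
    intro x y h
    obtain ⟨x', y', rfl, rfl, rfl⟩ := List.map_eq_append_iff.1 h
    rw [dp_ren]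
    exact h2 x' y' rfl

theorem LProv.rename {s : List LTok} {A : LTy} (r : ℕ → ℕ) (h : LProv s A) :
    LProv (s.map (tren r)) (ren r A) := by
  induction h with
  | id p k => exact .id p (r k)
  | ldivL G U V A B C _ _ ih1 ih2 =>
    exact (LProv.ldivL _ _ _ _ _ _ ih1 (ih2.congr (by simp [tren]; rfl))).congr
      (by simp [tren, ren])
  | rdivL G U V A B C _ _ ih1 ih2 =>
    exact (LProv.rdivL _ _ _ _ _ _ ih1 (ih2.congr (by simp [tren]; rfl))).congr
      (by simp [tren, ren])
  | ldivR G A B hG _ ih => exact LProv.ldivR _ _ _ (by simpa using hG) ih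
  | rdivR G A B hG _ ih =>
    exact LProv.rdivR _ _ _ (by simpa using hG) (ih.congr (by simp [tren]))
  | mulL U V A B C _ ih =>
    exact (LProv.mulL _ _ _ _ _ (ih.congr (by simp [tren]; rfl))).congr
      (by simp [tren, ren])
  | mulR G D A B _ _ ih1 ih2 => exact (LProv.mulR _ _ _ _ ih1 ih2).congr (by simp)
  | diaL U V i j A C _ ih =>
    exact (LProv.diaL _ _ _ _ _ _ (ih.congr (by simp [tren]; rfl))).congr
      (by simp [tren, ren])
  | diaR G i j A _ ih => exact (LProv.diaR _ _ _ _ ih).congr (by simp [tren])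
  | boxL U V i j A C _ ih =>
    exact (LProv.boxL _ _ (r i) (r j) _ _ (ih.congr (by simp [tren]; rfl))).congr
      (by simp [tren, ren])
  | boxR G i j A hG hb _ ih =>
    exact LProv.boxR _ _ _ _ (by simpa using hG) ((bal_ren r G).2 hb) (ih.congr (by simp [tren]))

theorem ren_ren (r q : ℕ → ℕ) (A : LTy) : ren r (ren q A) = ren (r ∘ q) A := by
  induction A <;> simp_all [ren]

theorem tren_tren (r q : ℕ → ℕ) (t : LTok) : tren r (tren q t) = tren (r ∘ q) t := by
  cases t <;> simp [tren, ren_ren]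

theorem map_tren_tren (r q : ℕ → ℕ) (s : List LTok) :
    (s.map (tren q)).map (tren r) = s.map (tren (r ∘ q)) := by
  simp [tren_tren]

theorem cnt_ren {r : ℕ → ℕ} (hr : Function.Injective r) (g : Gen) (A : LTy) :
    cnt (gren r g) (ren r A) = cnt g A := by
  induction A <;> cases g <;> simp_all [cnt, ren, gren, hr.eq_iff]

theorem cnt_ren_zero {r : ℕ → ℕ} (g : Gen) (hg : ∀ k, r k ≠ glab g) (A : LTy) :
    cnt g (ren r A) = 0 := by
  induction A <;> cases g <;> simp_all [cnt, ren, glab] <;> grind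

theorem scnt_ren {r : ℕ → ℕ} (hr : Function.Injective r) (g : Gen) (s : List LTok) :
    scnt (gren r g) (s.map (tren r)) = scnt g s := by
  induction s with
  | nil => rfl
  | cons t s ih =>
    simp only [List.map_cons, scnt, ih]
    congr 1
    cases t
    · exact cnt_ren hr g _
    all_goals cases g <;> simp [tren, tcnt, gren, hr.eq_iff]

theorem scnt_ren_zero {r : ℕ → ℕ} (g : Gen) (hg : ∀ k, r k ≠ glab g) (s : List LTok) :
    scnt g (s.map (tren r)) = 0 := by
  induction s with
  | nil => rfl
  | cons t s ih =>
    simp only [List.map_cons, scnt, ih]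
    cases t
    · simpa [tcnt, tren] using cnt_ren_zero g hg _
    all_goals cases g <;> simp_all [tren, tcnt, glab] <;> grind

/-- Thin sequents. -/
def Thin (s : List LTok) (A : LTy) : Prop := ∀ g, scnt g s + cnt g A ≤ 2

/-- The zero relabelling. -/
def zr : ℕ → ℕ := fun _ => 0

/-- Existence of a thin version of a sequent. -/
def Lift (s : List LTok) (A : LTy) : Prop :=
  ∃ s' A', LProv s' A' ∧ s'.map (tren zr) = s.map (tren zr) ∧ ren zr A' = ren zr A ∧ Thin s' A'

theorem Lift.pair {s t : List LTok} {A B : LTy} (h1 : Lift s A) (h2 : Lift t B) :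
    ∃ s' A' t' B', LProv s' A' ∧ LProv t' B' ∧
      s'.map (tren zr) = s.map (tren zr) ∧ ren zr A' = ren zr A ∧
      t'.map (tren zr) = t.map (tren zr) ∧ ren zr B' = ren zr B ∧
      ∀ g, scnt g s' + cnt g A' + scnt g t' + cnt g B' ≤ 2 := by
  obtain ⟨s', A', p1, p2, p3, p4⟩ := h1
  obtain ⟨t', B', q1, q2, q3, q4⟩ := h2
  have he : Function.Injective (fun k : ℕ => 2 * k) := fun a b h => by simpa using h
  have ho : Function.Injective (fun k : ℕ => 2 * k + 1) := fun a b h => by simpa using h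
  refine ⟨s'.map (tren fun k => 2 * k), ren (fun k => 2 * k) A',
    t'.map (tren fun k => 2 * k + 1), ren (fun k => 2 * k + 1) B', p1.rename _, q1.rename _,
    ?_, ?_, ?_, ?_, ?_⟩
  · rw [map_tren_tren]; exact p2
  · rw [ren_ren]; exact p3
  · rw [map_tren_tren]; exact q2
  · rw [ren_ren]; exact q3
  · intro g
    rcases Nat.even_or_odd' (glab g) with ⟨c, hc | hc⟩
    · have e : ∃ g', g = gren (fun k => 2 * k) g' := by
        cases g with
        | p p k => exact ⟨.p p c, by simp_all [gren, glab]⟩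
        | o k => exact ⟨.o c, by simp_all [gren, glab]⟩
        | c k => exact ⟨.c c, by simp_all [gren, glab]⟩
      have hz : ∀ k, (fun k : ℕ => 2 * k + 1) k ≠ glab g := by
        intro k; simp only; omega
      rw [cnt_ren_zero g hz, scnt_ren_zero g hz]
      obtain ⟨g', rfl⟩ := e
      rw [cnt_ren he, scnt_ren he]
      exact p4 g'
    · have e : ∃ g', g = gren (fun k => 2 * k + 1) g' := by
        cases g with
        | p p k => exact ⟨.p p c, by simp_all [gren, glab]⟩
        | o k => exact ⟨.o c, by simp_all [gren, glab]⟩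
        | c k => exact ⟨.c c, by simp_all [gren, glab]⟩
      have hz : ∀ k, (fun k : ℕ => 2 * k) k ≠ glab g := by
        intro k; simp only; omega
      rw [cnt_ren_zero g hz, scnt_ren_zero g hz]
      obtain ⟨g', rfl⟩ := e
      rw [cnt_ren ho, scnt_ren ho]
      simpa using q4 g'

theorem tren_eq_ty {t : LTok} {A : LTy} (h : tren zr t = .ty A) : ∃ A', t = .ty A' ∧ ren zr A' = A := by
  cases t <;> simp_all [tren]

theorem tren_eq_op {t : LTok} {i : ℕ} (h : tren zr t = .op i) : ∃ k, t = .op k := by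
  cases t <;> simp_all [tren]

theorem tren_eq_cl {t : LTok} {i : ℕ} (h : tren zr t = .cl i) : ∃ k, t = .cl k := by
  cases t <;> simp_all [tren]

theorem map_inv_ty {s U V : List LTok} {A : LTy}
    (h : s.map (tren zr) = (U ++ .ty A :: V).map (tren zr)) :
    ∃ U' A' V', s = U' ++ .ty A' :: V' ∧ U'.map (tren zr) = U.map (tren zr) ∧
      ren zr A' = ren zr A ∧ V'.map (tren zr) = V.map (tren zr) := by
  rw [List.map_append, List.map_cons] at h
  obtain ⟨U', W, rfl, h1, h2⟩ := List.map_eq_append_iff.1 h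
  obtain ⟨t, V', rfl, h3, h4⟩ := List.map_eq_cons_iff.1 h2
  obtain ⟨A', rfl, h5⟩ := tren_eq_ty h3
  exact ⟨U', A', V', rfl, h1, h5, h4⟩

theorem map_inv_op {s U V : List LTok} {i : ℕ}
    (h : s.map (tren zr) = (U ++ .op i :: V).map (tren zr)) :
    ∃ U' k V', s = U' ++ .op k :: V' ∧ U'.map (tren zr) = U.map (tren zr) ∧
      V'.map (tren zr) = V.map (tren zr) := by
  rw [List.map_append, List.map_cons] at h
  obtain ⟨U', W, rfl, h1, h2⟩ := List.map_eq_append_iff.1 h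
  obtain ⟨t, V', rfl, h3, h4⟩ := List.map_eq_cons_iff.1 h2
  obtain ⟨k, rfl⟩ := tren_eq_op h3
  exact ⟨U', k, V', rfl, h1, h4⟩

theorem map_inv_cl {s U V : List LTok} {i : ℕ}
    (h : s.map (tren zr) = (U ++ .cl i :: V).map (tren zr)) :
    ∃ U' k V', s = U' ++ .cl k :: V' ∧ U'.map (tren zr) = U.map (tren zr) ∧
      V'.map (tren zr) = V.map (tren zr) := by
  rw [List.map_append, List.map_cons] at h
  obtain ⟨U', W, rfl, h1, h2⟩ := List.map_eq_append_iff.1 h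
  obtain ⟨t, V', rfl, h3, h4⟩ := List.map_eq_cons_iff.1 h2
  obtain ⟨k, rfl⟩ := tren_eq_cl h3
  exact ⟨U', k, V', rfl, h1, h4⟩

theorem map_nil_inv {s : List LTok} (h : s.map (tren zr) = ([] : List LTok).map (tren zr)) :
    s = [] := by simpa using h

theorem map_ne {s t : List LTok} (h : s.map (tren zr) = t.map (tren zr)) (ht : t ≠ []) :
    s ≠ [] := by
  rintro rfl
  simp at h
  exact ht h

theorem Lift.fresh {s : List LTok} {A : LTy} (h : Lift s A) :
    ∃ s' A', LProv s' A' ∧ s'.map (tren zr) = s.map (tren zr) ∧ ren zr A' = ren zr A ∧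
      Thin s' A' ∧ ∀ g, glab g = 0 → scnt g s' + cnt g A' = 0 := by
  obtain ⟨s', A', p1, p2, p3, p4⟩ := h
  have he : Function.Injective (fun k : ℕ => k + 1) := fun a b h => by simpa using h
  have hz : ∀ g, glab g = 0 →
      scnt g (s'.map (tren fun k => k + 1)) + cnt g (ren (fun k => k + 1) A') = 0 := by
    intro g hg
    rw [cnt_ren_zero g (by simp [hg]), scnt_ren_zero g (by simp [hg])]
  refine ⟨s'.map (tren fun k => k + 1), ren (fun k => k + 1) A', p1.rename _, ?_, ?_, ?_, hz⟩
  · rw [map_tren_tren]; exact p2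
  · rw [ren_ren]; exact p3
  · intro g
    rcases Nat.eq_zero_or_pos (glab g) with hg | hg
    · rw [hz g hg]; omega
    · have e : ∃ g', g = gren (fun k => k + 1) g' := by
        cases g with
        | p p k => exact ⟨.p p (k - 1), by simp_all [gren, glab]; omega⟩
        | o k => exact ⟨.o (k - 1), by simp_all [gren, glab]; omega⟩
        | c k => exact ⟨.c (k - 1), by simp_all [gren, glab]; omega⟩
      obtain ⟨g', rfl⟩ := e
      rw [cnt_ren he, scnt_ren he]
      exact p4 g'

theorem thin_fresh {s t : List LTok} {A B : LTy} (h : Thin s A)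
    (hz : ∀ g, glab g = 0 → scnt g s + cnt g A = 0)
    (hg : ∀ g, scnt g t + cnt g B = scnt g s + cnt g A +
      2 * ((if g = .o 0 then 1 else 0) + (if g = .c 0 then 1 else 0))) : Thin t B := by
  intro g
  have h1 := h g
  have h2 := hg g
  by_cases ho : g = .o 0
  · have := hz g (by simp [ho, glab])
    have : g ≠ .c 0 := by simp [ho]
    simp only [ho, if_true] at *
    simp at h2
    omega
  · by_cases hc : g = .c 0
    · have := hz g (by simp [hc, glab])
      simp only [hc, if_true] at *
      simp at h2
      omega
    · simp only [ho, hc, if_false] at h2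
      omega

theorem LProv.lift {s : List LTok} {A : LTy} (h : LProv s A) : Lift s A := by
  induction h with
  | id p k =>
    refine ⟨_, _, .id p k, rfl, rfl, ?_⟩
    intro g
    simp only [scnt, tcnt, cnt]
    split <;> omega
  | ldivL G U V A B C _ _ ih1 ih2 =>
    obtain ⟨G', A', s', C', p1, q1, p2, p3, q2, q3, hc⟩ := ih1.pair ih2
    obtain ⟨U', B', V', rfl, e1, e2, e3⟩ := map_inv_ty q2
    refine ⟨_, _, .ldivL _ _ _ _ _ _ p1 q1, ?_, q3, ?_⟩
    · simp [e1, e3, p2, tren, ren, p3, e2]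
    · intro g
      have := hc g
      simp only [scnt_append, scnt, tcnt, cnt] at *
      omega
  | rdivL G U V A B C _ _ ih1 ih2 =>
    obtain ⟨G', A', s', C', p1, q1, p2, p3, q2, q3, hc⟩ := ih1.pair ih2
    obtain ⟨U', B', V', rfl, e1, e2, e3⟩ := map_inv_ty q2
    refine ⟨_, _, .rdivL _ _ _ _ _ _ p1 q1, ?_, q3, ?_⟩
    · simp [e1, e3, p2, tren, ren, p3, e2]
    · intro g
      have := hc g
      simp only [scnt_append, scnt, tcnt, cnt] at *
      omega
  | ldivR G A B hG _ ih =>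
    obtain ⟨s', B', p1, p2, p3, hc⟩ := ih
    obtain ⟨U', A', V', rfl, e1, e2, e3⟩ := map_inv_ty (U := []) p2
    obtain rfl := map_nil_inv e1
    refine ⟨_, _, .ldivR _ _ _ (map_ne e3 hG) p1, e3, by simp [ren, e2, p3], ?_⟩
    intro g
    have := hc g
    simp only [scnt_append, scnt, tcnt, cnt] at *
    omega
  | rdivR G A B hG _ ih =>
    obtain ⟨s', B', p1, p2, p3, hc⟩ := ih
    obtain ⟨U', A', V', rfl, e1, e2, e3⟩ := map_inv_ty (V := []) p2
    obtain rfl := map_nil_inv e3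
    refine ⟨_, _, .rdivR _ _ _ (map_ne e1 hG) p1, e1, by simp [ren, e2, p3], ?_⟩
    intro g
    have := hc g
    simp only [scnt_append, scnt, tcnt, cnt] at *
    omega
  | mulL U V A B C _ ih =>
    obtain ⟨s', C', p1, p2, p3, hc⟩ := ih
    obtain ⟨U', A', V', rfl, e1, e2, e3⟩ := map_inv_ty p2
    obtain ⟨U2, B', V2, rfl, f1, f2, f3⟩ := map_inv_ty (U := []) e3
    obtain rfl := map_nil_inv f1
    refine ⟨_, _, .mulL _ _ _ _ _ p1, ?_, p3, ?_⟩
    · simp [e1, f3, tren, ren, e2, f2]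
    · intro g
      have := hc g
      simp only [List.nil_append, scnt_append, scnt, tcnt, cnt] at *
      omega
  | mulR G D A B _ _ ih1 ih2 =>
    obtain ⟨G', A', s', C', p1, q1, p2, p3, q2, q3, hc⟩ := ih1.pair ih2
    refine ⟨_, _, .mulR _ _ _ _ p1 q1, by simp [p2, q2], by simp [ren, p3, q3], ?_⟩
    intro g
    have := hc g
    simp only [scnt_append, cnt] at *
    omega
  | diaL U V i j A C _ ih =>
    obtain ⟨s', C', p1, p2, p3, hc⟩ := ih
    obtain ⟨U', k, V', rfl, e1, e3⟩ := map_inv_op p2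
    obtain ⟨U2, A', V2, rfl, f1, f2, f3⟩ := map_inv_ty (U := []) e3
    obtain rfl := map_nil_inv f1
    obtain ⟨U3, l, V3, rfl, g1, g3⟩ := map_inv_cl (U := []) f3
    obtain rfl := map_nil_inv g1
    refine ⟨_, _, .diaL _ _ _ _ _ _ p1, ?_, p3, ?_⟩
    · simp [e1, g3, tren, ren, f2, zr]
    · intro g
      have := hc g
      simp only [List.nil_append, scnt_append, scnt, tcnt, cnt] at *
      omega
  | diaR G i j A _ ih =>
    obtain ⟨s', A', p1, p2, p3, hc, hz⟩ := ih.fresh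
    refine ⟨_, _, .diaR _ 0 0 _ p1, by simp [p2, tren, zr], by simp [ren, p3, zr], ?_⟩
    exact thin_fresh hc hz (by
      intro g
      simp only [scnt_append, scnt, tcnt, cnt]
      omega)
  | boxL U V i j A C _ ih =>
    obtain ⟨s', C', p1, p2, p3, hc, hz⟩ := ih.fresh
    obtain ⟨U', A', V', rfl, e1, e2, e3⟩ := map_inv_ty p2
    refine ⟨_, _, .boxL _ _ 0 0 _ _ p1, by simp [e1, e2, e3, tren, ren, zr], p3, ?_⟩
    exact thin_fresh hc hz (by
      intro g
      simp only [scnt_append, scnt, tcnt, cnt]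
      omega)
  | boxR G i j A hG hb _ ih =>
    obtain ⟨s', C', p1, p2, p3, hc⟩ := ih
    obtain ⟨U', k, V', rfl, e1, e3⟩ := map_inv_op (U := []) p2
    obtain rfl := map_nil_inv e1
    obtain ⟨U3, l, V3, rfl, g1, g3⟩ := map_inv_cl (V := []) e3
    obtain rfl := map_nil_inv g3
    refine ⟨_, _, .boxR _ _ _ _ (map_ne g1 hG) ?_ p1, g1, by simp [ren, p3, zr], ?_⟩
    · rw [← bal_ren zr, g1, bal_ren]; exact hb
    · intro g
      have := hc g
      simp only [List.nil_append, List.cons_append, scnt_append, scnt, tcnt, cnt] at *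
      omega

/-! ### Free groups -/

section FreeGroupPart

variable {α : Type} [DecidableEq α]

/-- Length of the longest common initial segment. -/
def lcp {β : Type} [DecidableEq β] : List β → List β → ℕ
  | a :: u, b :: v => if a = b then lcp u v + 1 else 0
  | _, _ => 0

theorem lcp_min {β : Type} [DecidableEq β] (x y z : List β) :
    min (lcp x y) (lcp y z) ≤ lcp x z := by
  induction x generalizing y z with
  | nil => simp [lcp]
  | cons a x ih =>
    rcases y with _ | ⟨b, y⟩
    · simp [lcp]
    rcases z with _ | ⟨c, z⟩
    · simp [lcp]
    have := ih y z
    simp only [lcp]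
    split_ifs <;> simp_all

theorem lcp_spec {β : Type} [DecidableEq β] (u v : List β) :
    ∃ p u' v', u = p ++ u' ∧ v = p ++ v' ∧ p.length = lcp u v ∧
      ∀ a ∈ u'.head?, ∀ b ∈ v'.head?, a ≠ b := by
  induction u generalizing v with
  | nil => exact ⟨[], [], v, by simp [lcp]⟩
  | cons a u ih =>
    rcases v with _ | ⟨b, v⟩
    · exact ⟨[], a :: u, [], by simp [lcp]⟩
    by_cases h : a = b
    · obtain ⟨p, u', v', rfl, rfl, h3, h4⟩ := ih v
      exact ⟨a :: p, u', v', by simp, by simp [h], by simp [lcp, h, h3], h4⟩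
    · exact ⟨[], a :: u, b :: v, by simp, by simp, by simp [lcp, h], by simpa using h⟩

theorem norm_of_reduced {w : List (α × Bool)} (h : FreeGroup.IsReduced w) :
    (FreeGroup.mk w).norm = w.length := by
  rw [FreeGroup.norm, FreeGroup.toWord_mk, h.reduce_eq]

theorem fg_norm_inv_mul (x y : FreeGroup α) :
    (x⁻¹ * y).norm + 2 * lcp x.toWord y.toWord = x.norm + y.norm := by
  obtain ⟨p, u, v, h1, h2, h3, h4⟩ := lcp_spec x.toWord y.toWord
  have hx : x = FreeGroup.mk p * FreeGroup.mk u := by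
    rw [FreeGroup.mul_mk, ← h1, FreeGroup.mk_toWord]
  have hy : y = FreeGroup.mk p * FreeGroup.mk v := by
    rw [FreeGroup.mul_mk, ← h2, FreeGroup.mk_toWord]
  have hxy : x⁻¹ * y = FreeGroup.mk (FreeGroup.invRev u ++ v) := by
    rw [← FreeGroup.mul_mk, ← FreeGroup.inv_mk]
    rw [hx, hy]
    group
  have rx : FreeGroup.IsReduced (p ++ u) := h1 ▸ FreeGroup.isReduced_toWord
  have ry : FreeGroup.IsReduced (p ++ v) := h2 ▸ FreeGroup.isReduced_toWord
  have ru : FreeGroup.IsReduced u := (List.isChain_append.1 rx).2.1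
  have rv : FreeGroup.IsReduced v := (List.isChain_append.1 ry).2.1
  have hr : FreeGroup.IsReduced (FreeGroup.invRev u ++ v) := by
    refine List.isChain_append.2 ⟨?_, rv, ?_⟩
    · change FreeGroup.IsReduced _
      rw [FreeGroup.isReduced_iff_reduce_eq, FreeGroup.reduce_invRev, ru.reduce_eq]
    intro a ha b hb
    rcases u with _ | ⟨c, u⟩
    · simp [FreeGroup.invRev] at ha
    · simp [FreeGroup.invRev] at ha
      have := h4 c (by simp) b hb
      subst ha
      intro h
      simp only at h ⊢
      have : c.2 ≠ b.2 := fun h' => this (Prod.ext h h')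
      revert this
      cases c.2 <;> cases b.2 <;> simp
  rw [hxy, norm_of_reduced hr, ← h3]
  simp only [FreeGroup.norm, h1, h2, List.length_append, FreeGroup.invRev_length]
  omega

theorem four_point (x y z : FreeGroup α) :
    y.norm + (x⁻¹ * z).norm ≤ max (x.norm + (y⁻¹ * z).norm) (z.norm + (x⁻¹ * y).norm) := by
  have h1 := fg_norm_inv_mul x y
  have h2 := fg_norm_inv_mul y z
  have h3 := fg_norm_inv_mul x z
  have h4 := lcp_min x.toWord y.toWord z.toWord
  rcases le_total (lcp x.toWord y.toWord) (lcp y.toWord z.toWord) with h | h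
  · rw [min_eq_left h] at h4
    exact le_max_of_le_right (by omega)
  · rw [min_eq_right h] at h4
    exact le_max_of_le_left (by omega)

theorem prod_grow (l : List (FreeGroup α)) : ∀ (p a : FreeGroup α), p.norm < (p * a).norm →
    (∀ X c d Y, a :: l = X ++ c :: d :: Y → max c.norm d.norm < (c * d).norm) →
    p.norm < (p * (a :: l).prod).norm := by
  induction l with
  | nil => intro p a h _; simpa using h
  | cons b l ih =>
    intro p a h hadj
    have h1 := hadj [] a b l rfl
    have h2 := four_point p (p * a) (p * a * b)
    have e1 : p⁻¹ * (p * a * b) = a * b := by group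
    have e2 : (p * a)⁻¹ * (p * a * b) = b := by group
    have e3 : p⁻¹ * (p * a) = a := by group
    rw [e1, e2, e3] at h2
    have h3 : (p * a).norm < (p * a * b).norm := by
      rcases le_max_iff.1 h2 with h2 | h2 <;> simp only [max_lt_iff] at h1 <;> omega
    have := ih (p * a) b h3 (fun X c d Y e => hadj (a :: X) c d Y (by simp [e]))
    rw [List.prod_cons, ← mul_assoc]
    omega

theorem exists_pair (us : List (FreeGroup α)) (h1 : us.prod = 1) (h2 : 2 ≤ us.length) :
    ∃ X a b Y, us = X ++ a :: b :: Y ∧ (a * b).norm ≤ max a.norm b.norm := by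
  by_contra hcon
  push Not at hcon
  rcases us with _ | ⟨a, _ | ⟨b, l⟩⟩
  · simp at h2
  · simp at h2
  have hab := hcon [] a b l rfl
  have := prod_grow (b :: l) 1 a (by
    rw [one_mul, FreeGroup.norm_one]
    rcases Nat.eq_zero_or_pos a.norm with h | h
    · rw [FreeGroup.norm_eq_zero] at h
      simp [h] at hab
    · exact h) hcon
  rw [h1] at this
  simp at this

end FreeGroupPart

/-- The free group word of a type. -/
def wd : LTy → List (Gen × Bool)
  | .prim p k => [(.p p k, true)]
  | .ldiv A B => FreeGroup.invRev (wd A) ++ wd B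
  | .rdiv B A => wd B ++ FreeGroup.invRev (wd A)
  | .mul A B => wd A ++ wd B
  | .dia i j A => (.o i, true) :: (wd A ++ [(.c j, true)])
  | .box i j A => (.o i, false) :: (wd A ++ [(.c j, false)])

/-- The free group value of a type. -/
def val (A : LTy) : FreeGroup Gen := FreeGroup.mk (wd A)

theorem wd_length (A : LTy) : (wd A).length = lenP (er A) := by
  induction A <;> simp_all [wd, er, lenP]

theorem count_invRev (g : Gen) (w : List (Gen × Bool)) :
    ((FreeGroup.invRev w).map Prod.fst).count g = (w.map Prod.fst).count g := by
  have : (FreeGroup.invRev w).map Prod.fst = (w.map Prod.fst).reverse := by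
    simp [FreeGroup.invRev, Function.comp_def]
  rw [this, List.count_reverse]

theorem wd_count (g : Gen) (A : LTy) : ((wd A).map Prod.fst).count g = cnt g A := by
  induction A with
  | prim p k => simp [wd, cnt, List.count_singleton, @eq_comm Gen g]
  | ldiv A B h1 h2 => simp only [wd, cnt, List.map_append, List.count_append, count_invRev, h1, h2]
  | rdiv A B h1 h2 => simp only [wd, cnt, List.map_append, List.count_append, count_invRev, h1, h2]
  | mul A B h1 h2 => simp only [wd, cnt, List.map_append, List.count_append, h1, h2]
  | dia i j A h =>
    simp only [wd, cnt, List.map_cons, List.map_append, List.map_nil, List.count_cons,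
      List.count_append, List.count_nil, h, beq_iff_eq, @eq_comm Gen g]
    omega
  | box i j A h =>
    simp only [wd, cnt, List.map_cons, List.map_append, List.map_nil, List.count_cons,
      List.count_append, List.count_nil, h, beq_iff_eq, @eq_comm Gen g]
    omega

theorem norm_val_le (A : LTy) : (val A).norm ≤ lenP (er A) := by
  rw [← wd_length]
  exact FreeGroup.norm_mk_le

theorem norm_val_thin {A : LTy} (h : ∀ g, cnt g A ≤ 1) : (val A).norm = lenP (er A) := by
  rw [← wd_length]
  apply norm_of_reduced
  have h1 : ((wd A).map Prod.fst).Nodup := by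
    rw [List.nodup_iff_count_le_one]
    intro g
    rw [wd_count]
    exact h g
  have h2 : (wd A).Pairwise (fun a b => a.1 ≠ b.1) := List.pairwise_map.1 h1
  exact (h2.imp (fun hab h => absurd h hab)).isChain

/-- The free group value of a token. -/
def tval : LTok → FreeGroup Gen
  | .ty A => val A
  | .op i => FreeGroup.of (.o i)
  | .cl j => FreeGroup.of (.c j)

/-- The free group value of a string. -/
def sval (s : List LTok) : FreeGroup Gen := (s.map tval).prod

theorem val_ldiv (A B : LTy) : val (.ldiv A B) = (val A)⁻¹ * val B := by
  simp [val, wd, FreeGroup.inv_mk, FreeGroup.mul_mk]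
theorem val_rdiv (A B : LTy) : val (.rdiv B A) = val B * (val A)⁻¹ := by
  simp [val, wd, FreeGroup.inv_mk, FreeGroup.mul_mk]
theorem val_mul (A B : LTy) : val (.mul A B) = val A * val B := by
  simp [val, wd, FreeGroup.mul_mk]
theorem val_dia (i j : ℕ) (A : LTy) :
    val (.dia i j A) = FreeGroup.of (.o i) * (val A * FreeGroup.of (.c j)) := by
  simp [val, wd, FreeGroup.of, FreeGroup.mul_mk]
theorem val_box (i j : ℕ) (A : LTy) :
    val (.box i j A) = (FreeGroup.of (.o i))⁻¹ * (val A * (FreeGroup.of (.c j))⁻¹) := by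
  simp [val, wd, FreeGroup.of, FreeGroup.mul_mk, FreeGroup.inv_mk, FreeGroup.invRev]

theorem sval_append (s t : List LTok) : sval (s ++ t) = sval s * sval t := by
  simp [sval]

theorem sval_cons (a : LTok) (t : List LTok) : sval (a :: t) = tval a * sval t := by
  simp [sval]

theorem sval_nil : sval [] = 1 := rfl

theorem LProv.value {s : List LTok} {C : LTy} (h : LProv s C) : sval s = val C := by
  induction h with
  | id p k => simp [sval, tval]
  | ldivL G U V A B C _ _ ih1 ih2 =>
    rw [← ih2]
    simp [sval_append, sval_cons, tval, ih1, val_ldiv, mul_assoc]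
  | rdivL G U V A B C _ _ ih1 ih2 =>
    rw [← ih2]
    simp [sval_append, sval_cons, tval, ih1, val_rdiv, mul_assoc]
  | ldivR G A B _ _ ih =>
    rw [val_ldiv, ← ih]
    simp [sval_append, sval_cons, tval]
  | rdivR G A B _ _ ih =>
    rw [val_rdiv, ← ih]
    simp [sval_append, sval_cons, tval, sval_nil]
  | mulL U V A B C _ ih =>
    rw [← ih]
    simp [sval_append, sval_cons, tval, val_mul, mul_assoc]
  | mulR G D A B _ _ ih1 ih2 => rw [val_mul, sval_append, ih1, ih2]
  | diaL U V i j A C _ ih =>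
    rw [← ih]
    simp [sval_append, sval_cons, tval, val_dia, mul_assoc]
  | diaR G i j A _ ih =>
    rw [val_dia, ← ih]
    simp [sval_append, sval_cons, tval, sval_nil]
  | boxL U V i j A C _ ih =>
    rw [← ih]
    simp [sval_append, sval_cons, tval, val_box, mul_assoc]
  | boxR G i j A _ _ _ ih =>
    rw [val_box, ← ih]
    simp [sval_append, sval_cons, tval, sval_nil, mul_assoc]

/-! ### Back to trees -/

mutual
/-- Flattening of a tree to a string. -/
def flatT : PTree → List LTok
  | .leaf A => [.ty (emb A)]
  | .node ts => .op 0 :: (flatH ts ++ [.cl 0])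
/-- Flattening of a hedge to a string. -/
def flatH : List PTree → List LTok
  | [] => []
  | t :: ts => flatT t ++ flatH ts
end

mutual
theorem bal_flatT : ∀ t : PTree, Bal (flatT t)
  | .leaf A => by rw [flatT]; exact Bal.ty _
  | .node ts => by rw [flatT]; exact (bal_flatH ts).br 0 0
theorem bal_flatH : ∀ H : List PTree, Bal (flatH H)
  | [] => by rw [flatH]; exact Bal.nil
  | t :: ts => by rw [flatH]; exact (bal_flatT t).append (bal_flatH ts)
end

theorem flatH_append (H K : List PTree) : flatH (H ++ K) = flatH H ++ flatH K := by
  induction H with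
  | nil => simp [flatH]
  | cons t ts ih => simp [flatH, ih]

theorem flat_split (H : List PTree) : ∀ W V, flatH H = W ++ V → Bal W →
    ∃ K R, H = K ++ R ∧ flatH K = W ∧ flatH R = V := by
  induction H with
  | nil =>
    intro W V h _
    rw [flatH] at h
    have h := List.append_eq_nil_iff.1 h.symm
    exact ⟨[], [], rfl, by rw [flatH, h.1], by rw [flatH, h.2]⟩
  | cons t ts ih =>
    intro W V h hW
    by_cases hW0 : W = []
    · subst hW0
      exact ⟨[], t :: ts, rfl, by rw [flatH], h⟩
    have h' := h
    rw [flatH] at h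
    rcases List.append_eq_append_iff.1 h with ⟨W', rfl, h2⟩ | ⟨T, h1, h2⟩
    · obtain ⟨K, R, rfl, h3, h4⟩ := ih W' V h2 (bal_final hW (bal_flatT t).1)
      exact ⟨t :: K, R, rfl, by rw [flatH, h3], h4⟩
    · by_cases hT : T = []
      · subst hT
        exact ⟨[t], ts, rfl, by simpa [flatH] using h1, by simpa using h2.symm⟩
      exfalso
      obtain ⟨T', a, rfl⟩ := (snoc_cases T).resolve_left hT
      cases t with
      | leaf A =>
        have := congrArg List.length h1
        have : 0 < W.length := List.length_pos_iff.2 hW0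
        simp [flatT] at *
        omega
      | node G =>
        rw [flatT] at h1
        rcases W with _ | ⟨b, W1⟩
        · exact hW0 rfl
        rw [List.cons_append, List.cons.injEq, ← List.append_assoc] at h1
        obtain ⟨rfl, h1⟩ := h1
        have h3 := (List.append_inj' h1 rfl).1
        have h4 := (bal_flatH G).2 _ _ h3
        have h5 := hW.1
        simp [dp, tdp] at h5
        omega

/-- Prepend a tree to a context. -/
def PCtx.pre (t : PTree) : PCtx → PCtx
  | .hole a b => .hole (t :: a) b
  | .brk c a b => .brk c (t :: a) b

theorem PCtx.pre_plug (t : PTree) (D : PCtx) (X : PHedge) :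
    (D.pre t).plug X = t :: D.plug X := by
  cases D <;> simp [PCtx.pre, PCtx.plug]

theorem decomp : ∀ (H : List PTree) (U W V : List LTok), flatH H = U ++ (W ++ V) → W ≠ [] →
    Bal W → ∃ (D : PCtx) (K : PHedge), H = D.plug K ∧ flatH K = W ∧
      ∀ X, flatH (D.plug X) = U ++ (flatH X ++ V)
  | [], U, W, V, h, hW0, hW => by
    rw [flatH] at h
    have := List.append_eq_nil_iff.1 h.symm
    have := List.append_eq_nil_iff.1 this.2
    exact absurd this.1 hW0
  | t :: ts, U, W, V, h, hW0, hW => by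
    by_cases hU : U = []
    · subst hU
      obtain ⟨K, R, h1, h2, h3⟩ := flat_split _ W V h hW
      refine ⟨.hole [] R, K, by simpa [PCtx.plug] using h1, h2, fun X => ?_⟩
      simp [PCtx.plug, flatH_append, h3]
    have h0 := h
    rw [flatH] at h
    rcases List.append_eq_append_iff.1 h with ⟨U', rfl, h2⟩ | ⟨T, h1, h2⟩
    · obtain ⟨D, K, rfl, h3, h4⟩ := decomp ts U' W V h2 hW0 hW
      refine ⟨D.pre t, K, (PCtx.pre_plug _ _ _).symm, h3, fun X => ?_⟩
      rw [PCtx.pre_plug, flatH, h4]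
      simp
    · cases t with
      | leaf A =>
        rw [flatT] at h1
        rcases U with _ | ⟨b, U⟩
        · exact absurd rfl hU
        simp at h1
        obtain ⟨rfl, rfl, rfl⟩ := h1
        obtain ⟨D, K, rfl, h3, h4⟩ := decomp ts [] W V (by simpa using h2.symm) hW0 hW
        refine ⟨D.pre _, K, (PCtx.pre_plug _ _ _).symm, h3, fun X => ?_⟩
        rw [PCtx.pre_plug, flatH, h4]
        simp [flatT]
      | node G =>
        rw [flatT] at h1 h
        rcases U with _ | ⟨b, U⟩
        · exact absurd rfl hU
        simp only [List.cons_append, List.cons.injEq, List.append_assoc, List.nil_append] at h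
        obtain ⟨rfl, h⟩ := h
        rw [List.cons_append, List.cons.injEq] at h1
        have h1 := h1.2
        rcases snoc_cases T with rfl | ⟨T', a, rfl⟩
        · obtain ⟨D, K, rfl, h3, h4⟩ := decomp ts [] W V (by simpa using h2.symm) hW0 hW
          refine ⟨D.pre _, K, (PCtx.pre_plug _ _ _).symm, h3, fun X => ?_⟩
          rw [PCtx.pre_plug, flatH, h4, flatT, h1]
          simp
        rw [← List.append_assoc] at h1
        obtain ⟨h3, h5⟩ := List.append_inj' h1 rfl
        simp at h5
        subst h5
        have hb := bal_flatH G
        rw [h3] at hb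
        have e1 := hb.1
        have e2 := hb.2 U T' rfl
        rw [dp_append] at e1
        simp only [List.append_assoc, List.cons_append, List.nil_append] at h2
        rcases List.append_eq_append_iff.1 h2 with ⟨Z, h6, h7⟩ | ⟨Z, h6, h7⟩
        · obtain ⟨D, K, rfl, h8, h9⟩ := decomp G U W Z (by rw [h3, h6]) hW0 hW
          refine ⟨.brk D [] ts, K, by simp [PCtx.plug], h8, fun X => ?_⟩
          simp [PCtx.plug, flatH, flatT, h9, h7]
        · rcases Z with _ | ⟨z, Z⟩
          · obtain ⟨D, K, rfl, h8, h9⟩ := decomp G U W [] (by rw [h3, h6]; simp) hW0 hW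
            refine ⟨.brk D [] ts, K, by simp [PCtx.plug], h8, fun X => ?_⟩
            simp at h7
            simp [PCtx.plug, flatH, flatT, h9, ← h7]
          · exfalso
            simp at h7
            obtain ⟨rfl, h7⟩ := h7
            have := hW.2 (T' ++ [.cl 0]) Z (by simp [h6])
            simp [dp_append, dp, tdp] at this
            omega
termination_by H => sizeOf H
decreasing_by
  all_goals simp_wf
  all_goals (try subst_vars)
  all_goals (try simp)
  all_goals omega

theorem emb_inj {A B : PTy} (h : emb A = emb B) : A = B := by
  rw [← er_emb A, h, er_emb]

theorem flat_nil {K : List PTree} (h : flatH K = []) : K = [] := by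
  rcases K with _ | ⟨⟨A⟩ | ⟨G⟩, ts⟩ <;> simp_all [flatH, flatT]

theorem flat_ty {K : List PTree} {A : PTy} {s : List LTok} (h : flatH K = .ty (emb A) :: s) :
    ∃ K', K = .leaf A :: K' ∧ flatH K' = s := by
  rcases K with _ | ⟨⟨A'⟩ | ⟨G⟩, ts⟩
  · simp [flatH] at h
  · simp [flatH, flatT] at h
    exact ⟨ts, by rw [emb_inj h.1], h.2⟩
  · simp [flatH, flatT] at h

theorem flat_op {K : List PTree} {s : List LTok} (hs : Bal s)
    (h : flatH K = .op 0 :: (s ++ [.cl 0])) : ∃ G, K = [.node G] ∧ flatH G = s := by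
  rcases K with _ | ⟨⟨A'⟩ | ⟨G⟩, ts⟩
  · simp [flatH] at h
  · simp [flatH, flatT] at h
  · simp only [flatH, flatT, List.cons_append, List.cons.injEq, true_and, List.append_assoc,
      List.nil_append] at h
    rcases List.append_eq_append_iff.1 h with ⟨Z, h1, h2⟩ | ⟨Z, h1, h2⟩
    · rcases Z with _ | ⟨z, Z⟩
      · simp at h1 h2
        exact ⟨G, by rw [flat_nil h2], h1.symm⟩
      · exfalso
        simp at h2
        obtain ⟨rfl, h2⟩ := h2
        have := hs.2 (flatH G ++ [.cl 0]) Z (by simp [h1])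
        simp [dp_append, dp, tdp, (bal_flatH G).1] at this
    · have := congrArg List.length h2
      simp at this
      have hZ : Z = [] := List.length_eq_zero_iff.1 (by omega)
      subst hZ
      simp at h1 h2
      exact ⟨G, by rw [flat_nil h2], h1⟩

theorem ren_zr (A : LTy) : ren zr A = emb (er A) := by
  induction A <;> simp_all [ren, emb, er, zr]

/-- Erasure of labels in a string. -/
def fl (s : List LTok) : List LTok := s.map (tren zr)

theorem fl_append (s t : List LTok) : fl (s ++ t) = fl s ++ fl t := by simp [fl]
theorem fl_ty (A : LTy) (s : List LTok) : fl (.ty A :: s) = .ty (emb (er A)) :: fl s := by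
  simp [fl, tren, ren_zr]
theorem fl_op (i : ℕ) (s : List LTok) : fl (.op i :: s) = .op 0 :: fl s := by
  simp [fl, tren, zr]
theorem fl_cl (i : ℕ) (s : List LTok) : fl (.cl i :: s) = .cl 0 :: fl s := by
  simp [fl, tren, zr]
theorem fl_nil : fl [] = [] := rfl

theorem decomp_ty {H : List PTree} {U V : List LTok} {A : PTy}
    (h : flatH H = U ++ .ty (emb A) :: V) : ∃ D : PCtx, H = D.plug [.leaf A] ∧
      ∀ X, flatH (D.plug X) = U ++ (flatH X ++ V) := by
  obtain ⟨D, K, h1, h2, h3⟩ := decomp H U [.ty (emb A)] V h (by simp) (Bal.ty _)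
  obtain ⟨K', rfl, h4⟩ := flat_ty h2
  rw [flat_nil h4] at h1
  exact ⟨D, h1, h3⟩

theorem LProv.tree {s : List LTok} {A : LTy} (h : LProv s A) :
    ∃ H, flatH H = fl s ∧ PProv H (er A) := by
  induction h with
  | id p k => exact ⟨[.leaf (.prim p)], by simp [flatH, flatT, fl_ty, fl_nil, er], .id p⟩
  | ldivL G U V A B C _ _ ih1 ih2 =>
    obtain ⟨H1, e1, p1⟩ := ih1
    obtain ⟨H2, e2, p2⟩ := ih2
    rw [fl_append, fl_ty] at e2
    obtain ⟨D, rfl, h3⟩ := decomp_ty e2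
    refine ⟨_, ?_, .ldivL H1 D _ _ _ p1 p2⟩
    rw [h3]
    simp [flatH_append, flatH, flatT, fl_append, fl_ty, e1, er]
  | rdivL G U V A B C _ _ ih1 ih2 =>
    obtain ⟨H1, e1, p1⟩ := ih1
    obtain ⟨H2, e2, p2⟩ := ih2
    rw [fl_append, fl_ty] at e2
    obtain ⟨D, rfl, h3⟩ := decomp_ty e2
    refine ⟨_, ?_, .rdivL H1 D _ _ _ p1 p2⟩
    rw [h3]
    simp [flatH, flatT, fl_append, fl_ty, e1, er]
  | ldivR G A B hG _ ih =>
    obtain ⟨H1, e1, p1⟩ := ih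
    rw [fl_ty] at e1
    obtain ⟨K, rfl, h4⟩ := flat_ty e1
    refine ⟨K, h4, .ldivR _ _ _ ?_ p1⟩
    rintro rfl
    simp [flatH, fl] at h4
    exact hG h4
  | rdivR G A B hG _ ih =>
    obtain ⟨H1, e1, p1⟩ := ih
    rw [fl_append, fl_ty, fl_nil] at e1
    obtain ⟨K, R, rfl, h1, h2⟩ := flat_split _ _ _ e1 ((bal_ren zr G).2 (bal_initial
      (LProv.bal (by assumption)) rfl))
    obtain ⟨K', rfl, h4⟩ := flat_ty h2
    rw [flat_nil h4] at p1
    refine ⟨K, h1, .rdivR _ _ _ ?_ p1⟩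
    rintro rfl
    simp [flatH, fl] at h1
    exact hG h1
  | mulL U V A B C _ ih =>
    obtain ⟨H1, e1, p1⟩ := ih
    rw [fl_append, fl_ty, fl_ty] at e1
    obtain ⟨D, K, rfl, h2, h3⟩ := decomp H1 (fl U) [.ty (emb (er A)), .ty (emb (er B))] (fl V)
      (by simpa using e1) (by simp) ((Bal.ty _).append (Bal.ty _))
    obtain ⟨K', rfl, h4⟩ := flat_ty h2
    obtain ⟨K'', rfl, h5⟩ := flat_ty h4
    rw [flat_nil h5] at p1
    refine ⟨_, ?_, .mulL D _ _ _ p1⟩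
    rw [h3]
    simp [flatH, flatT, fl_append, fl_ty, er]
  | mulR G D A B _ _ ih1 ih2 =>
    obtain ⟨H1, e1, p1⟩ := ih1
    obtain ⟨H2, e2, p2⟩ := ih2
    exact ⟨_, by rw [flatH_append, e1, e2, fl_append], .mulR _ _ _ _ p1 p2⟩
  | diaL U V i j A C _ ih =>
    obtain ⟨H1, e1, p1⟩ := ih
    rw [fl_append, fl_op, fl_ty, fl_cl] at e1
    obtain ⟨D, K, rfl, h2, h3⟩ := decomp H1 (fl U) (.op 0 :: ([.ty (emb (er A))] ++ [.cl 0])) (fl V)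
      (by simpa using e1) (by simp) ((Bal.ty _).br 0 0)
    obtain ⟨G, rfl, h4⟩ := flat_op (Bal.ty _) h2
    obtain ⟨K'', rfl, h5⟩ := flat_ty h4
    rw [flat_nil h5] at p1
    refine ⟨_, ?_, .diaL D _ _ p1⟩
    rw [h3]
    simp [flatH, flatT, fl_append, fl_ty, er]
  | diaR G i j A _ ih =>
    obtain ⟨H1, e1, p1⟩ := ih
    exact ⟨_, by simp [flatH, flatT, fl_op, fl_append, fl_cl, fl_nil, e1], .diaR _ _ p1⟩
  | boxL U V i j A C _ ih =>
    obtain ⟨H1, e1, p1⟩ := ih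
    rw [fl_append, fl_ty] at e1
    obtain ⟨D, rfl, h3⟩ := decomp_ty e1
    refine ⟨_, ?_, .boxL D _ _ p1⟩
    rw [h3]
    simp [flatH, flatT, fl_append, fl_ty, fl_op, fl_cl, er]
  | boxR G i j A hG hb _ ih =>
    obtain ⟨H1, e1, p1⟩ := ih
    rw [fl_op, fl_append, fl_cl, fl_nil] at e1
    obtain ⟨K, rfl, h4⟩ := flat_op ((bal_ren zr G).2 hb) e1
    exact ⟨K, h4, .boxR _ _ p1⟩

theorem flat_leaves (L : List LTy) : ∀ {H : List PTree}, flatH H = fl (L.map .ty) →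
    H = (L.map er).map PTree.leaf := by
  induction L with
  | nil => intro H h; exact flat_nil h
  | cons A L ih =>
    intro H h
    rw [List.map_cons, fl_ty] at h
    obtain ⟨K, rfl, h4⟩ := flat_ty h
    rw [ih h4]
    simp

theorem LProv.toPProv {L : List LTy} {A : LTy} (h : LProv (L.map .ty) A) :
    PProv ((L.map er).map PTree.leaf) (er A) := by
  obtain ⟨H, e, p⟩ := h.tree
  rwa [flat_leaves L e] at p

/-! ### The main induction -/

theorem over_iff (B : Finset ℕ) (A : LTy) :
    (er A).over B ↔ ∀ p k, 0 < cnt (.p p k) A → p ∈ B := by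
  induction A with
  | prim p k =>
    simp only [er, PTy.over, cnt]
    constructor
    · intro h q l hq
      split_ifs at hq with h'
      · simp at h'; rw [h'.1]; exact h
      · omega
    · intro h
      exact h p k (by simp)
  | ldiv A C h1 h2 => simp only [er, PTy.over, cnt, h1, h2, Nat.add_pos_iff_pos_or_pos]; grind
  | rdiv A C h1 h2 => simp only [er, PTy.over, cnt, h1, h2, Nat.add_pos_iff_pos_or_pos]; grind
  | mul A C h1 h2 => simp only [er, PTy.over, cnt, h1, h2, Nat.add_pos_iff_pos_or_pos]; grind
  | dia i j A h => simp [er, PTy.over, cnt, h]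
  | box i j A h => simp [er, PTy.over, cnt, h]

theorem scnt_pos {g : Gen} {L : List LTy} (h : 0 < scnt g (L.map .ty)) : ∃ T ∈ L, 0 < cnt g T := by
  induction L with
  | nil => simp [scnt] at h
  | cons A L ih =>
    simp only [List.map_cons, scnt, tcnt] at h
    rcases Nat.eq_zero_or_pos (cnt g A) with h1 | h1
    · obtain ⟨T, hT, h2⟩ := ih (by omega)
      exact ⟨T, by simp [hT], h2⟩
    · exact ⟨A, by simp, h1⟩

theorem over_interp {B : Finset ℕ} {L : List LTy} {E : LTy}
    (hL : ∀ T ∈ L, (er T).over B) (hE : ∀ g, cnt g E ≤ scnt g (L.map .ty)) : (er E).over B := by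
  rw [over_iff]
  intro p k hp
  obtain ⟨T, hT, h⟩ := scnt_pos (lt_of_lt_of_le hp (hE _))
  exact (over_iff B T).1 (hL T hT) p k h

theorem bal_tys (L : List LTy) : Bal (L.map .ty) := by
  induction L with
  | nil => exact Bal.nil
  | cons A L ih => exact (Bal.ty A).append ih

theorem sval_tys (L : List LTy) : sval (L.map .ty) = (L.map val).prod := by
  simp [sval, Function.comp_def, tval]

theorem base_case {B : Finset ℕ} {m : ℕ} {L : List LTy} {C : LTy} (h : LProv (L.map .ty) C)
    (hn : L.length ≤ 2) (hall : ∀ T ∈ C :: L, (er T).over B ∧ lenP (er T) ≤ m) :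
    CutDeriv (SBm B m) ((L.map er).map PTree.leaf) (er C) := by
  refine .base _ _ ⟨L.map er, er C, rfl, by simpa using hn, ?_, h.toPProv⟩
  intro T hT
  rw [← List.map_cons, List.mem_map] at hT
  obtain ⟨T', h1, rfl⟩ := hT
  exact hall T' h1

theorem main_ind (B : Finset ℕ) (m : ℕ) : ∀ (n : ℕ) (L : List LTy) (C : LTy), L.length = n →
    LProv (L.map .ty) C → Thin (L.map .ty) C →
    (∀ T ∈ C :: L, (er T).over B ∧ lenP (er T) ≤ m) →
    CutDeriv (SBm B m) ((L.map er).map PTree.leaf) (er C) := by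
  intro n
  induction n using Nat.strong_induction_on with
  | _ n IH =>
  intro L C hLn h hthin hall
  by_cases hn : n ≤ 2
  · exact base_case h (by omega) hall
  have hnorm : ∀ T ∈ C :: L, (val T).norm ≤ m := fun T hT => (norm_val_le T).trans (hall T hT).2
  have hprod : (L.map val).prod = val C := by rw [← sval_tys, h.value]
  obtain ⟨X, a, b, Y, hXY, hab⟩ := exists_pair (L.map val ++ [(val C)⁻¹]) (by simp [hprod])
    (by simp; omega)
  rcases snoc_cases Y with rfl | ⟨Y, y, rfl⟩
  · have e : L.map val ++ [(val C)⁻¹] = (X ++ [a]) ++ [b] := by simpa using hXY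
    obtain ⟨e1, e2⟩ := List.append_inj' e rfl
    simp at e2
    subst e2
    obtain ⟨L1, L2, rfl, f1, f2⟩ := List.map_eq_append_iff.1 e1
    obtain ⟨t, L3, rfl, f3, f4⟩ := List.map_eq_cons_iff.1 f2
    have : L3 = [] := by simpa using f4
    subst this
    have hL1 : L1 ≠ [] := by
      rintro rfl
      simp at hLn
      omega
    obtain ⟨E, q1, q2, q3⟩ := interpolation h [] (L1.map .ty) [.ty t] (by simp)
      (by simpa using hL1) (bal_tys L1)
    have hc1 : ∀ g, scnt g (L1.map .ty) + cnt g t + cnt g C ≤ 2 := by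
      intro g
      have := hthin g
      simp only [List.map_append, List.map_cons, List.map_nil, scnt_append, scnt, tcnt] at this
      omega
    have q4 : ∀ g, cnt g E ≤ scnt g (L1.map .ty) := fun g => (q3 g).1
    have q5 : ∀ g, cnt g E ≤ cnt g t + cnt g C := by
      intro g
      have := (q3 g).2
      simp only [scnt, tcnt] at this
      omega
    have hlen : lenP (er E) ≤ m := by
      rw [← norm_val_thin (fun g => by have := q4 g; have := q5 g; have := hc1 g; omega)]
      have hE : val E = (a * (val C)⁻¹)⁻¹ := by
        rw [← q1.value, sval_tys, ← hprod, ← f3]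
        simp
      rw [hE, FreeGroup.norm_inv_eq]
      refine hab.trans (max_le ?_ ?_)
      · rw [← f3]; exact hnorm t (by simp)
      · rw [FreeGroup.norm_inv_eq]; exact hnorm C (by simp)
    have hover : (er E).over B := over_interp (fun T hT => (hall T (by simp [hT])).1) q4
    have c1 : CutDeriv (SBm B m) ((L1.map er).map PTree.leaf) (er E) := by
      refine IH L1.length (by simp at hLn; omega) L1 E rfl q1 ?_ ?_
      · intro g
        have := q5 g
        have := hc1 g
        omega
      · intro T hT
        rcases List.mem_cons.1 hT with rfl | hT
        · exact ⟨hover, hlen⟩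
        · exact hall T (by simp [hT])
    have c2 : CutDeriv (SBm B m) (([E, t].map er).map PTree.leaf) (er C) := by
      refine base_case q2 (by simp) ?_
      intro T hT
      simp only [List.mem_cons, List.not_mem_nil, or_false] at hT
      rcases hT with rfl | rfl | rfl
      · exact hall _ (by simp)
      · exact ⟨hover, hlen⟩
      · exact hall _ (by simp)
    have := CutDeriv.cut _ (.hole [] [.leaf (er t)]) _ _ c1 (by simpa [PCtx.plug] using c2)
    simpa [PCtx.plug] using this
  · have e : L.map val ++ [(val C)⁻¹] = (X ++ a :: b :: Y) ++ [y] := by simpa using hXY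
    obtain ⟨e1, -⟩ := List.append_inj' e rfl
    obtain ⟨L1, L2, rfl, f1, f2⟩ := List.map_eq_append_iff.1 e1
    obtain ⟨s, L3, rfl, f3, f4⟩ := List.map_eq_cons_iff.1 f2
    obtain ⟨t, L4, rfl, f5, f6⟩ := List.map_eq_cons_iff.1 f4
    obtain ⟨E, q1, q2, q3⟩ := interpolation h (L1.map .ty) ([s, t].map .ty) (L4.map .ty) (by simp)
      (by simp) (bal_tys _)
    have hc1 : ∀ g, scnt g (L1.map .ty) + (scnt g ([s, t].map .ty) + scnt g (L4.map .ty)) +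
        cnt g C ≤ 2 := by
      intro g
      have := hthin g
      simp only [List.map_append, List.map_cons, List.map_nil, scnt_append, scnt, tcnt] at this ⊢
      omega
    have q4 : ∀ g, cnt g E ≤ scnt g ([s, t].map .ty) := fun g => (q3 g).1
    have hlen : lenP (er E) ≤ m := by
      rw [← norm_val_thin (fun g => by
        have := q4 g; have := (q3 g).2; have := hc1 g; omega)]
      have hE : val E = a * b := by
        rw [← q1.value, sval_tys, ← f3, ← f5]
        simp
      rw [hE]
      refine hab.trans (max_le ?_ ?_)
      · rw [← f3]; exact hnorm s (by simp)
      · rw [← f5]; exact hnorm t (by simp)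
    have hover : (er E).over B := by
      refine over_interp (fun T hT => (hall T ?_).1) q4
      simp only [List.mem_cons, List.not_mem_nil, or_false] at hT
      rcases hT with rfl | rfl <;> simp
    have c1 : CutDeriv (SBm B m) (([s, t].map er).map PTree.leaf) (er E) := by
      refine base_case q1 (by simp) ?_
      intro T hT
      simp only [List.mem_cons, List.not_mem_nil, or_false] at hT
      rcases hT with rfl | rfl | rfl
      · exact ⟨hover, hlen⟩
      · exact hall _ (by simp)
      · exact hall _ (by simp)
    have c2 : CutDeriv (SBm B m) (((L1 ++ E :: L4).map er).map PTree.leaf) (er C) := by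
      refine IH (L1 ++ E :: L4).length (by simp at hLn ⊢; omega) (L1 ++ E :: L4) C rfl
        (by simpa using q2) ?_ ?_
      · intro g
        have := q4 g
        have := hc1 g
        simp only [List.map_append, List.map_cons, scnt_append, scnt, tcnt] at *
        omega
      · intro T hT
        simp only [List.mem_cons, List.mem_append] at hT
        rcases hT with rfl | hT | rfl | hT
        · exact hall _ (by simp)
        · exact hall _ (by simp [hT])
        · exact ⟨hover, hlen⟩
        · exact hall _ (by simp [hT])
    have := CutDeriv.cut _ (.hole ((L1.map er).map PTree.leaf) ((L4.map er).map PTree.leaf)) _ _ c1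
      (by simpa [PCtx.plug] using c2)
    simpa [PCtx.plug] using this

theorem lift_tys (L : List PTy) : ∀ s : List LTok,
    s.map (tren zr) = (L.map (fun T => LTok.ty (emb T))).map (tren zr) →
    ∃ L' : List LTy, s = L'.map .ty ∧ L'.map er = L := by
  induction L with
  | nil =>
    intro s h
    exact ⟨[], by simpa using h, rfl⟩
  | cons A L ih =>
    intro s h
    obtain ⟨U', A', V', rfl, h1, h2, h3⟩ := map_inv_ty (U := []) h
    obtain rfl := map_nil_inv h1
    obtain ⟨L', rfl, rfl⟩ := ih V' h3
    refine ⟨A' :: L', by simp, ?_⟩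
    rw [ren_zr, ren_zr, er_emb] at h2
    simp [emb_inj h2]

/-- Every L◇-provable bracket-free sequent over `B` with all types of length ≤ m is
derivable from `S_{B,m}` using the Cut rule only. -/
theorem cut_derivable_from_SBm (B : Finset ℕ) (m : ℕ) (hm : 0 < m)
    (L : List PTy) (A : PTy)
    (hall : ∀ T ∈ A :: L, PTy.over B T ∧ lenP T ≤ m)
    (h : PProv (L.map PTree.leaf) A) :
    CutDeriv (SBm B m) (L.map PTree.leaf) A := by

  obtain ⟨s, A', p1, p2, p3, p4⟩ := (cut_elim h).lift
  obtain ⟨L', rfl, rfl⟩ := lift_tys L s p2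
  rw [ren_zr, ren_zr, er_emb] at p3
  obtain rfl := emb_inj p3
  refine main_ind B m _ L' A' rfl p1 p4 ?_
  intro T hT
  exact hall (er T) (by
    rw [← List.map_cons]
    exact List.mem_map_of_mem hT)
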